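/- arXiv:2407.06834 — 13 statements merged into one kernel-verified Lean document; each statement's English description precedes it below -/
import Mathlib

section
/- The determinant of Q equals (−1)^{n−1} · v₁^{n−2} · ‖v‖², where ‖v‖ is the Euclidean norm of v. -/
/-!
The vector `v` is itself the right combination of the columns of `Q`: since `v 0` is real,
`Q *ᵥ v = ‖v‖² • e₀`. By Cramer's rule, `det Q * v 0` is therefore the determinant of `Q` with its
first column replaced by `‖v‖² • e₀`. That matrix is upper triangular with diagonal
`‖v‖², -v 0, …, -v 0`, so `det Q * v 0 = ‖v‖² * (-v 0) ^ (n - 1)`, and dividing by `v 0` gives the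
formula.
-/

open Matrix Complex

/-- Cramer's rule, in the form that the system `A *ᵥ x = b` with `b` defined by `x` is solved
by `x`, without assuming `A` invertible. -/
lemma det_updateCol_mulVec {m : ℕ} (A : Matrix (Fin m) (Fin m) ℂ) (x : Fin m → ℂ) (i : Fin m) :
    (A.updateCol i (A *ᵥ x)).det = A.det * x i := by
  rw [← cramer_apply, cramer_eq_adjugate_mulVec, mulVec_mulVec, adjugate_mul, smul_mulVec,
    one_mulVec, Pi.smul_apply, smul_eq_mul]

lemma det_mul_head (m : ℕ) (v : Fin (m + 1) → ℂ) (hv_re : (v 0).im = 0)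
    (Q : Matrix (Fin (m + 1)) (Fin (m + 1)) ℂ)
    (hQ : ∀ j i : Fin (m + 1), Q j i =
      if i = 0 then v j
      else (starRingEnd ℂ) (v i) * (if j = 0 then 1 else 0)
        - v 0 * (if j = i then 1 else 0)) :
    Q.det * v 0 = (∑ i, (Complex.normSq (v i) : ℂ)) * (-v 0) ^ m := by
  have hconj : (starRingEnd ℂ) (v 0) = v 0 := Complex.conj_eq_iff_im.mpr hv_re
  have hQv : Q *ᵥ v = Pi.single 0 (∑ i, (Complex.normSq (v i) : ℂ)) := by
    ext j
    simp only [mulVec, dotProduct, hQ, Fin.sum_univ_succ, Complex.normSq_eq_conj_mul_self]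
    refine Fin.cases ?_ (fun k => ?_) j
    · simp [hconj, Fin.succ_ne_zero, (Fin.succ_ne_zero _).symm]
    · simp [Fin.succ_ne_zero, mul_comm]
  rw [← det_updateCol_mulVec, hQv, det_of_isUpperTriangular, Fin.prod_univ_succ]
  · simp [hQ, Fin.succ_ne_zero]
  · intro j i hij
    have hij : i < j := hij
    have hj : j ≠ 0 := (lt_of_le_of_lt (Fin.zero_le i) hij).ne'
    by_cases hi : i = 0
    · subst hi
      simp [hj]
    · simp [hi, hQ, hj, hij.ne']

/-- `det Q = (-1)^(n-1) * v₁^(n-2) * ‖v‖²` (the exponent `n - 2`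
taken as an integer, `v₁ = v 0` being real and nonzero). -/
theorem stmt1 (n : ℕ) [NeZero n] (hn : 1 ≤ n) (v : Fin n → ℂ)
    (hv_re : (v 0).im = 0) (hv_ne : v 0 ≠ 0)
    (Q : Matrix (Fin n) (Fin n) ℂ)
    (hQ : ∀ j i : Fin n, Q j i =
      if i = 0 then v j
      else (starRingEnd ℂ) (v i) * (if j = 0 then 1 else 0)
        - v 0 * (if j = i then 1 else 0)) :
    Q.det = (-1 : ℂ) ^ (n - 1) * (v 0) ^ ((n : ℤ) - 2)
      * (∑ i, (Complex.normSq (v i) : ℂ)) := by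
  obtain ⟨m, rfl⟩ : ∃ m, n = m + 1 := ⟨n - 1, by omega⟩
  have h := det_mul_head m v hv_re Q hQ
  have hexp : v 0 ^ (((m + 1 : ℕ) : ℤ) - 2) * v 0 = v 0 ^ m := by
    rw [← zpow_add_one₀ hv_ne, ← zpow_natCast]
    congr 1
    push_cast
    ring
  apply mul_right_cancel₀ hv_ne
  refine h.trans ?_
  rw [neg_pow, Nat.add_sub_cancel]
  linear_combination -(∑ i, (Complex.normSq (v i) : ℂ)) * (-1) ^ m * hexp
end

section
/- The inverse of Q is given explicitly by Q⁻¹ = (1/(v₁·‖v‖²))·v·v† − D, where v·v† is the rank-one matrix with entries vᵢ·conj(vⱼ) and D is the diagonal matrix with D₁₁ = 0 and Dᵢᵢ = 1/v₁ for i ∈ {2,…,n}; that is, Q·((1/(v₁·‖v‖²))·v·v† − D) = I. -/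
/-!
Since `v 0` is real, `Q v = ‖v‖² e₀`: in each row `j ≠ 0` the contributions of `v` and of `qⱼ`
cancel. Hence `Q * (v v†) / (v₀ ‖v‖²) = e₀ v† / v₀`, and subtracting `Q D`, whose `i`-th column is
`qᵢ / v₀` for `i ≠ 0` and `0` for `i = 0`, leaves exactly `eᵢ` in every column `i`.
-/

open Matrix Complex

/-- `Q⁻¹ = (1/(v₁‖v‖²)) v v† − D`, with `D = diag(0, 1/v₁, …, 1/v₁)`;
i.e. `Q * ((1/(v₁‖v‖²)) v v† − D) = I`. -/
theorem stmt2 (n : ℕ) [NeZero n] (hn : 1 ≤ n) (v : Fin n → ℂ)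
    (hv_re : (v 0).im = 0) (hv_ne : v 0 ≠ 0)
    (Q : Matrix (Fin n) (Fin n) ℂ)
    (hQ : ∀ j i : Fin n, Q j i =
      if i = 0 then v j
      else (starRingEnd ℂ) (v i) * (if j = 0 then 1 else 0)
        - v 0 * (if j = i then 1 else 0)) :
    Q * ((v 0 * ∑ i, (Complex.normSq (v i) : ℂ))⁻¹ •
        (Matrix.of fun i j => v i * (starRingEnd ℂ) (v j))
      - Matrix.diagonal (fun i => if i = 0 then 0 else (v 0)⁻¹)) = 1 := by
  have hconj : (starRingEnd ℂ) (v 0) = v 0 := Complex.conj_eq_iff_im.mpr hv_re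
  have hS : (∑ i, (Complex.normSq (v i) : ℂ)) ≠ 0 := by
    rw [← Complex.ofReal_sum]
    refine Complex.ofReal_ne_zero.mpr (ne_of_gt ?_)
    exact Finset.sum_pos' (fun i _ => Complex.normSq_nonneg _)
      ⟨0, Finset.mem_univ _, Complex.normSq_pos.mpr hv_ne⟩
  set S := ∑ i, (Complex.normSq (v i) : ℂ) with hSdef
  have hQv : ∀ j, ∑ i, Q j i * v i = if j = 0 then S else 0 := by
    intro j
    -- For `i = 0` the first two terms cancel because `v 0` is real.
    have h : ∀ i, Q j i * v i = (if j = 0 then 1 else 0) * (Complex.normSq (v i) : ℂ)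
        - (if j = i then v 0 * v i else 0) + (if i = 0 then v j * v i else 0) := by
      intro i
      rw [hQ, Complex.normSq_eq_conj_mul_self]
      by_cases hi : i = 0
      · subst hi
        rw [hconj]
        split_ifs <;> ring
      · simp only [if_neg hi]
        split_ifs <;> ring
    simp only [h, Finset.sum_add_distrib, Finset.sum_sub_distrib, ← Finset.mul_sum, ← hSdef,
      Finset.sum_ite_eq, Finset.sum_ite_eq', Finset.mem_univ, if_true]
    split_ifs <;> ring
  ext j i
  have hmul : (Q * Matrix.of fun i j => v i * (starRingEnd ℂ) (v j)) j i
      = (if j = 0 then S else 0) * (starRingEnd ℂ) (v i) := by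
    rw [Matrix.mul_apply, ← hQv, Finset.sum_mul]
    simp only [Matrix.of_apply, mul_assoc]
  rw [Matrix.mul_sub, Matrix.mul_smul, Matrix.sub_apply, Matrix.smul_apply, hmul,
    Matrix.mul_diagonal, Matrix.one_apply, hQ, smul_eq_mul]
  by_cases hi : i = 0
  · subst hi
    rw [hconj]
    by_cases hj : j = 0
    · simp only [hj, if_true]
      field_simp
      ring
    · simp [hj]
  · by_cases hj : j = 0
    · subst hj
      simp only [if_neg hi, if_neg (Ne.symm hi), if_true]
      field_simp
      ring
    · simp only [if_neg hi, if_neg hj]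
      split_ifs <;> field_simp <;> ring
end

section
/- If A ∈ ℂ^{n×n} is Hermitian, λ ∈ ℝ, and A·v = λ·v, then the conjugated matrix M := Q⁻¹·A·Q satisfies M₁₁ = λ, M₁ⱼ = 0 for all j ∈ {2,…,n}, and Mⱼ₁ = 0 for all j ∈ {2,…,n}; i.e., Q⁻¹AQ is block diagonal with its (1,1) block equal to λ. -/
/-! The vectors `qᵢ` are orthogonal to `v` because `v₀` is real, so `v* Q = ‖v‖² e₀ᵀ`. This relation
makes `Q` injective: `Q x = 0` gives `‖v‖² x₀ = 0`, and then the remaining rows give `v₀ xⱼ = 0`.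
With `M = Q⁻¹ A Q`, the first column follows from `Q (M e₀) = A v = λ v = Q (λ e₀)`, and the
first row from `‖v‖² (e₀ᵀ M) = v* Q M = v* A Q = λ v* Q = λ ‖v‖² e₀ᵀ`, where `v* A = λ v*` because
`A` is Hermitian and `λ` is real. -/

open Matrix Complex

/-- if `A` is Hermitian with `A v = λ v` (`λ` real), then
`M = Q⁻¹ A Q` satisfies `M₁₁ = λ` and has zero first row and first column
off the (1,1) entry. -/
theorem stmt3 (n : ℕ) [NeZero n] (hn : 1 ≤ n) (v : Fin n → ℂ)
    (hv_re : (v 0).im = 0) (hv_ne : v 0 ≠ 0)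
    (Q : Matrix (Fin n) (Fin n) ℂ)
    (hQ : ∀ j i : Fin n, Q j i =
      if i = 0 then v j
      else (starRingEnd ℂ) (v i) * (if j = 0 then 1 else 0)
        - v 0 * (if j = i then 1 else 0))
    (A : Matrix (Fin n) (Fin n) ℂ) (hA : A.IsHermitian)
    (lam : ℝ) (hAv : A.mulVec v = (lam : ℂ) • v)
    (M : Matrix (Fin n) (Fin n) ℂ) (hM : M = Q⁻¹ * A * Q) :
    M 0 0 = (lam : ℂ) ∧ ∀ j : Fin n, j ≠ 0 → M 0 j = 0 ∧ M j 0 = 0 := by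
  have hconj : (starRingEnd ℂ) (v 0) = v 0 := Complex.conj_eq_iff_im.mpr hv_re
  have hs0 : star v ⬝ᵥ v ≠ 0 := by
    intro h
    open scoped ComplexOrder in
    exact hv_ne (congrFun (dotProduct_star_self_eq_zero.mp h) 0)
  have hvQ : star v ᵥ* Q = (star v ⬝ᵥ v) • Pi.single 0 1 := by
    ext i
    by_cases hi : i = 0
    · subst hi
      simp [vecMul, dotProduct, hQ]
    · simp only [vecMul, dotProduct, hQ, if_neg hi, Pi.star_apply, RCLike.star_def, mul_sub,
        Finset.sum_sub_distrib, Pi.smul_apply, Pi.single_eq_of_ne hi, smul_zero]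
      simp [hconj, mul_comm]
  have hinj : Function.Injective Q.mulVec := by
    rw [← Matrix.coe_mulVecLin, injective_iff_map_eq_zero]
    intro x hx
    rw [Matrix.mulVecLin_apply] at hx
    have h0 : x 0 = 0 := by
      have h := Matrix.dotProduct_mulVec (star v) Q x
      rw [hx, hvQ] at h
      simpa [smul_dotProduct, hs0] using h
    ext j
    by_cases hj : j = 0
    · rw [hj, h0]; rfl
    · have h : ∑ i, Q j i * x i = 0 := congrFun hx j
      rw [Finset.sum_eq_single j] at h
      · simpa [hQ, hj, hv_ne] using h
      · intro i _ hij
        by_cases hi : i = 0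
        · simp [hi, h0]
        · simp [hQ, hi, hj, hij.symm]
      · simp
  have hU : IsUnit Q.det :=
    (Matrix.isUnit_iff_isUnit_det Q).mp (Matrix.mulVec_injective_iff_isUnit.mp hinj)
  have hQM : Q * M = A * Q := by
    rw [hM, Matrix.mul_assoc, Matrix.mul_nonsing_inv_cancel_left _ _ hU]
  have hQe : Q *ᵥ Pi.single 0 1 = v := by
    ext j
    simp [hQ]
  have hcol : M *ᵥ Pi.single 0 1 = (lam : ℂ) • Pi.single 0 1 := by
    apply hinj
    rw [Matrix.mulVec_mulVec, hQM, ← Matrix.mulVec_mulVec, Matrix.mulVec_smul, hQe, hAv]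
  have hvA : star v ᵥ* A = (lam : ℂ) • star v := by
    have h := congrArg star hAv
    rw [Matrix.star_mulVec, hA.eq] at h
    rw [h]
    ext j
    simp
  have hrow : (star v ⬝ᵥ v) • (Pi.single 0 1 ᵥ* M)
      = (star v ⬝ᵥ v) • ((lam : ℂ) • (Pi.single 0 1 : Fin n → ℂ)) := by
    rw [← Matrix.smul_vecMul, ← hvQ, Matrix.vecMul_vecMul, hQM, ← Matrix.vecMul_vecMul, hvA,
      Matrix.smul_vecMul, hvQ, smul_comm]
  have hrow' := smul_right_injective _ hs0 hrow
  refine ⟨by simpa using congrFun hcol 0, fun j hj => ⟨?_, ?_⟩⟩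
  · simpa [hj] using congrFun hrow' j
  · simpa [hj] using congrFun hcol j
end

section
/- For every i ∈ {1,…,n}, the Gram determinant of the first i columns of Q, namely Gᵢ := det of the i×i matrix whose (j,k) entry is the Hermitian inner product ⟨q_k, q_j⟩, equals v₁^{2(i−2)}·‖v_{1:i}‖²·‖v‖², where v_{1:i} denotes the vector of the first i entries of v. -/
/-!
Since `v 0` is real, the columns `q_i` with `i ≠ 0` are all orthogonal to `q_0 = v`, and
`⟨q_k, q_j⟩ = conj (v j) * v k + (v 0)² δ_{jk}` for `j, k ≠ 0`. Hence the Gram matrix splits into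
the scalar block `‖v‖²` and a rank-one perturbation of `(v 0)² • 1`, whose determinant is given by
the matrix determinant lemma (`det_smul_one_add_rank_one`).
-/

open Matrix Complex

theorem det_smul_one_add_rank_one (p : ℕ) (c : ℂ) (hc : c ≠ 0) (a b : Fin p → ℂ) :
    (Matrix.of fun j k : Fin p => a j * b k + c * (if j = k then 1 else 0)).det
      = c ^ ((p : ℤ) - 1) * (c + ∑ m, a m * b m) := by
  have h : (Matrix.of fun j k : Fin p => a j * b k + c * (if j = k then 1 else 0))
      = c • (1 + replicateCol Unit (fun j => c⁻¹ * a j) * replicateRow Unit b) := by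
    ext j k
    simp [Matrix.one_apply, Matrix.mul_apply]
    field_simp
    split_ifs <;> ring
  rw [h, det_smul, det_one_add_replicateCol_mul_replicateRow, zpow_sub₀ hc, zpow_natCast, zpow_one,
    Fintype.card_fin]
  have h2 : b ⬝ᵥ (fun j => c⁻¹ * a j) = c⁻¹ * ∑ m, a m * b m := by
    rw [dotProduct, Finset.mul_sum]
    exact Finset.sum_congr rfl fun m _ => by ring
  rw [h2]
  field_simp

/-- for every `i ∈ {1,…,n}`, the Gram determinant of the
first `i` columns of `Q`, i.e. the determinant of the `i×i` matrix with
`(j,k)` entry `⟨q_k, q_j⟩`, equals `v₁^(2(i−2)) ‖v_{1:i}‖² ‖v‖²`. -/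
theorem stmt5 (n : ℕ) [NeZero n] (hn : 1 ≤ n) (v : Fin n → ℂ)
    (hv_re : (v 0).im = 0) (hv_ne : v 0 ≠ 0)
    (Q : Matrix (Fin n) (Fin n) ℂ)
    (hQ : ∀ j i : Fin n, Q j i =
      if i = 0 then v j
      else (starRingEnd ℂ) (v i) * (if j = 0 then 1 else 0)
        - v 0 * (if j = i then 1 else 0))
    (i : ℕ) (hi1 : 1 ≤ i) (hin : i ≤ n) :
    (Matrix.of fun j k : Fin i =>
        ∑ m : Fin n, (starRingEnd ℂ) (Q m (Fin.castLE hin k)) * Q m (Fin.castLE hin j)).det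
      = (v 0) ^ (2 * ((i : ℤ) - 2))
        * (∑ m : Fin i, (Complex.normSq (v (Fin.castLE hin m)) : ℂ))
        * (∑ m : Fin n, (Complex.normSq (v m) : ℂ)) := by
  have hconj : (starRingEnd ℂ) (v 0) = v 0 := Complex.conj_eq_iff_im.2 hv_re
  have h00 : ∑ m, (starRingEnd ℂ) (Q m 0) * Q m 0 = ∑ m : Fin n, (Complex.normSq (v m) : ℂ) :=
    Finset.sum_congr rfl fun m _ => by rw [hQ, if_pos rfl, Complex.normSq_eq_conj_mul_self]
  have h0k : ∀ k : Fin n, k ≠ 0 → ∑ m, (starRingEnd ℂ) (Q m k) * Q m 0 = 0 := by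
    intro k hk
    simp only [hQ, if_neg hk, if_pos, map_sub, map_mul, hconj, Complex.conj_conj, apply_ite
      (starRingEnd ℂ), map_one, map_zero, sub_mul, Finset.sum_sub_distrib]
    simp [mul_comm]
  have hjk : ∀ j k : Fin n, j ≠ 0 → k ≠ 0 → ∑ m, (starRingEnd ℂ) (Q m k) * Q m j
      = (starRingEnd ℂ) (v j) * v k + v 0 ^ 2 * (if j = k then 1 else 0) := by
    intro j k hj hk
    simp only [hQ, if_neg hk, if_neg hj, map_sub, map_mul, hconj, Complex.conj_conj, apply_ite
      (starRingEnd ℂ), map_one, map_zero, sub_mul, mul_sub, Finset.sum_sub_distrib]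
    simp [hk.symm, hj]
    split_ifs <;> ring
  obtain ⟨p, rfl⟩ : ∃ p, i = p + 1 := ⟨i - 1, by omega⟩
  have hc0 : Fin.castLE hin 0 = 0 := by ext; simp
  have hcs : ∀ j : Fin p, Fin.castLE hin j.succ ≠ 0 := by
    intro j h
    simpa using congrArg Fin.val h
  have hinj : ∀ j k : Fin p, Fin.castLE hin j.succ = Fin.castLE hin k.succ ↔ j = k := by
    intro j k
    simp
  rw [det_succ_row_zero, Fin.sum_univ_succ, Finset.sum_eq_zero]
  swap
  · intro k _
    simp [hc0, h0k _ (hcs k)]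
  have hsub : ((Matrix.of fun j k : Fin (p + 1) =>
        ∑ m : Fin n, (starRingEnd ℂ) (Q m (Fin.castLE hin k)) * Q m (Fin.castLE hin j)).submatrix
          Fin.succ (Fin.succAbove 0))
      = Matrix.of fun j k : Fin p =>
        (starRingEnd ℂ) (v (Fin.castLE hin j.succ)) * v (Fin.castLE hin k.succ)
          + v 0 ^ 2 * (if j = k then 1 else 0) := by
    ext j k
    simp [hjk _ _ (hcs j) (hcs k)]
  rw [hsub, det_smul_one_add_rank_one p (v 0 ^ 2) (pow_ne_zero 2 hv_ne)
    (fun j => (starRingEnd ℂ) (v (Fin.castLE hin j.succ))) (fun k => v (Fin.castLE hin k.succ)),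
    Fin.sum_univ_succ (n := p)]
  have hpow : (v 0 ^ 2) ^ ((p : ℤ) - 1) = v 0 ^ (2 * (((p + 1 : ℕ) : ℤ) - 2)) := by
    rw [← zpow_natCast, ← _root_.zpow_mul]
    congr 1
    push_cast
    ring
  simp only [hpow, Matrix.of_apply, hc0, h00, Complex.normSq_eq_conj_mul_self, hconj]
  simp only [Fin.val_zero, pow_zero]
  ring
end

section
/- If n ≥ 3 and every off-diagonal entry of Γ is strictly positive (so the underlying weighted graph is complete, hence non-bipartite), then the largest eigenvalue of L satisfies the strict inequality λ_max(L) < 2·max_i η_i. -/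
open Matrix

/-!
Let `L v = μ v` with `v ≠ 0`, suppose `2 η k ≤ μ` for all `k`, and let `|v i|` be maximal.
Multiplying the `i`-th coordinate of the eigenvalue equation by `v i` gives
`∑ j, Γ i j * (v i ^ 2 + v i * v j) = (2 * η i - μ) * v i ^ 2 ≤ 0`. The summands are nonnegative
by maximality, so all vanish, and positivity of the weights forces `v j = -v i` for every `j ≠ i`
(`eq_neg_of_abs_max`). Every such `j` also maximises `|v|`, so any two distinct coordinates of `v`
are opposite; three coordinates cannot be pairwise opposite unless they vanish. Hence every
eigenvalue is `< 2 max η`, and the spectrum, being finite, attains its supremum.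
-/

/-- If `v` satisfies the `i`-th coordinate of the Laplacian eigenvalue equation for some
`μ ≥ 2 * ∑ j, Γ i j`, and `|v|` is largest at `i`, then `v` takes the
opposite value at every other vertex. -/
lemma eq_neg_of_abs_max {n : ℕ} {Γ : Matrix (Fin n) (Fin n) ℝ}
    (hΓnn : ∀ i j, 0 ≤ Γ i j) (hΓpos : ∀ i j, i ≠ j → 0 < Γ i j)
    {v : Fin n → ℝ} {μ : ℝ} {i : Fin n} (hmax : ∀ j, |v j| ≤ |v i|) (hvi : v i ≠ 0)
    (heq : (∑ j, Γ i j) * v i - ∑ j, Γ i j * v j = μ * v i)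
    (hμ : 2 * ∑ j, Γ i j ≤ μ) (j : Fin n) (hj : j ≠ i) : v j = -v i := by
  have hnn : ∀ k ∈ Finset.univ, 0 ≤ Γ i k * (v i ^ 2 + v i * v k) := by
    intro k _
    refine mul_nonneg (hΓnn i k) ?_
    have h1 : |v i * v k| ≤ v i ^ 2 := by
      rw [abs_mul, ← sq_abs, sq]
      exact mul_le_mul_of_nonneg_left (hmax k) (abs_nonneg _)
    linarith [neg_abs_le (v i * v k)]
  have hsum : ∑ k, Γ i k * (v i ^ 2 + v i * v k) = (2 * ∑ k, Γ i k - μ) * v i ^ 2 := by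
    have h1 : ∑ k, Γ i k * (v i ^ 2 + v i * v k)
        = (∑ k, Γ i k) * v i ^ 2 + v i * ∑ k, Γ i k * v k := by
      rw [Finset.sum_mul, Finset.mul_sum, ← Finset.sum_add_distrib]
      exact Finset.sum_congr rfl fun k _ => by ring
    rw [h1]
    linear_combination (-v i) * heq
  have hzero : ∑ k, Γ i k * (v i ^ 2 + v i * v k) = 0 := by
    refine le_antisymm ?_ (Finset.sum_nonneg hnn)
    rw [hsum]
    exact mul_nonpos_of_nonpos_of_nonneg (by linarith) (sq_nonneg _)
  have hterm := (Finset.sum_eq_zero_iff_of_nonneg hnn).1 hzero j (Finset.mem_univ j)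
  have h2 : v i * (v i + v j) = 0 := by
    rcases mul_eq_zero.1 hterm with h | h
    · exact absurd h (hΓpos i j hj.symm).ne'
    · linear_combination h
  rcases mul_eq_zero.1 h2 with h | h
  · exact absurd h hvi
  · linarith

/-- if `n ≥ 3` and all off-diagonal entries of `Γ` are strictly
positive (complete, hence non-bipartite, weighted graph), then
`λ_max(L) < 2 max_i η_i`. -/
theorem stmt9 (n : ℕ) (hn : 3 ≤ n)
    (Γ : Matrix (Fin n) (Fin n) ℝ) (hΓsymm : Γ.IsSymm)
    (hΓrange : ∀ i j, Γ i j ∈ Set.Icc (0 : ℝ) 1)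
    (hΓdiag : ∀ i, Γ i i = 0)
    (hΓpos : ∀ i j, i ≠ j → 0 < Γ i j)
    (η : Fin n → ℝ) (hη : η = Γ.mulVec fun _ => 1)
    (L : Matrix (Fin n) (Fin n) ℝ) (hL : L = Matrix.diagonal η - Γ) :
    sSup (spectrum ℝ L) < 2 * ⨆ i, η i := by
  have hηsum : ∀ i, η i = ∑ j, Γ i j := fun i => by
    simp [hη, Matrix.mulVec, dotProduct]
  have hle : ∀ i, η i ≤ ⨆ i, η i := le_ciSup (Set.finite_range η).bddAbove
  have key : ∀ μ ∈ spectrum ℝ L, μ < 2 * ⨆ i, η i := by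
    intro μ hμ
    by_contra! hcon
    rw [← Matrix.spectrum_toLin', ← Module.End.hasEigenvalue_iff_mem_spectrum] at hμ
    obtain ⟨v, hv⟩ := hμ.exists_hasEigenvector
    have hLv : L *ᵥ v = μ • v := by simpa using hv.apply_eq_smul
    have heq : ∀ i, (∑ j, Γ i j) * v i - ∑ j, Γ i j * v j = μ * v i := fun i => by
      have h := congrFun hLv i
      rw [hL, Matrix.sub_mulVec, Pi.sub_apply, Matrix.mulVec_diagonal, hηsum] at h
      exact h
    have hμη : ∀ i, 2 * ∑ j, Γ i j ≤ μ := fun i => by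
      rw [← hηsum]; linarith [hle i]
    have : Nonempty (Fin n) := ⟨⟨0, by omega⟩⟩
    obtain ⟨i, hi⟩ := Finite.exists_max fun j => |v j|
    have hvi : v i ≠ 0 := fun h0 => hv.2 <| funext fun j => by
      have := hi j
      simpa [h0] using this
    have hneg := eq_neg_of_abs_max (fun a b => (hΓrange a b).1) hΓpos hi hvi (heq i) (hμη i)
    obtain ⟨j, hji⟩ : ∃ j, j ≠ i := by
      have : Nontrivial (Fin n) := Fin.nontrivial_iff_two_le.2 (by omega)
      exact exists_ne i
    obtain ⟨k, hki, hkj⟩ : ∃ k, k ≠ i ∧ k ≠ j := by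
      obtain ⟨k, hk⟩ := Finset.exists_mem_notMem_of_card_lt_card
        (s := {i, j}) (t := (Finset.univ : Finset (Fin n)))
        (by rw [Finset.card_univ, Fintype.card_fin]; exact Finset.card_le_two.trans_lt hn)
      exact ⟨k, by simpa using hk⟩
    have hj := hneg j hji
    have hk := hneg k hki
    have hkj' := eq_neg_of_abs_max (fun a b => (hΓrange a b).1) hΓpos
      (i := j) (by simpa [hj] using hi) (by simpa [hj] using hvi) (heq j) (hμη j) k hkj
    exact hvi (by linarith)
  rcases (spectrum ℝ L).eq_empty_or_nonempty with h | h
  · -- Here `sSup ∅ = 0`, so it suffices that some `η i` is positive.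
    rw [h, Real.sSup_empty]
    have h01 : (⟨0, by omega⟩ : Fin n) ≠ ⟨1, by omega⟩ := by simp
    have hpos : 0 < η ⟨0, by omega⟩ := by
      rw [hηsum]
      exact Finset.sum_pos' (fun j _ => (hΓrange _ j).1) ⟨_, Finset.mem_univ _, hΓpos _ _ h01⟩
    linarith [hle ⟨0, by omega⟩]
  · exact key _ (h.csSup_mem (Matrix.finite_spectrum L))
end

section
/- Let S be the (n−1)×(n−1) symmetric matrix obtained from L by deleting its first row and first column. Then S·1_{n−1} equals the vector (Γ_{2,1}, …, Γ_{n,1}), and every eigenvalue of S is greater than or equal to min_{i ∈ {2,…,n}} Γ_{i,1}. -/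
/-!
Every row of `L` sums to zero, so deleting the first column from row `i` leaves a row with sum
`-L i 0 = Γ i 0`; this is `S 1 = (Γ₂₁, …, Γₙ₁)`. The off-diagonal entries of `S` are nonpositive,
so this row sum is also `S k k - ∑_{j ≠ k} |S k j|`, the left end of the `k`-th Gershgorin disc.
By Gershgorin's theorem (`eigenvalue_mem_ball`) each eigenvalue is at least one of these left ends,
hence at least their minimum.
-/

open Matrix

/-- If the off-diagonal entries of a real matrix are nonpositive, each eigenvalue is bounded below
by some row sum. -/
theorem exists_rowSum_le_of_mem_spectrum {ι : Type*} [Fintype ι] [DecidableEq ι]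
    (S : Matrix ι ι ℝ) (hoff : ∀ i j, i ≠ j → S i j ≤ 0) {z : ℝ} (hz : z ∈ spectrum ℝ S) :
    ∃ k, S.mulVec (fun _ => 1) k ≤ z := by
  rw [← Matrix.spectrum_toLin', ← Module.End.hasEigenvalue_iff_mem_spectrum] at hz
  obtain ⟨k, hk⟩ := eigenvalue_mem_ball hz
  refine ⟨k, ?_⟩
  have habs : ∑ j ∈ Finset.univ.erase k, ‖S k j‖ = -∑ j ∈ Finset.univ.erase k, S k j := by
    rw [← Finset.sum_neg_distrib]
    refine Finset.sum_congr rfl fun j hj => ?_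
    rw [Real.norm_eq_abs, abs_of_nonpos (hoff k j (Finset.ne_of_mem_erase hj).symm)]
  rw [habs, Metric.mem_closedBall, Real.dist_eq] at hk
  have hsum := Finset.add_sum_erase Finset.univ (S k) (Finset.mem_univ k)
  simp only [Matrix.mulVec, dotProduct, mul_one]
  linarith [(abs_le.mp hk).1]

/-- the trailing `(n−1)×(n−1)` principal submatrix `S` of `L`
satisfies `S 1 = (Γ₂₁, …, Γₙ₁)`, and every eigenvalue of `S` is at least
`min_{i ∈ {2,…,n}} Γ_{i,1}`. -/
theorem stmt11 (n : ℕ) [NeZero n] (hn : 2 ≤ n)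
    (Γ : Matrix (Fin n) (Fin n) ℝ) (hΓsymm : Γ.IsSymm)
    (hΓrange : ∀ i j, Γ i j ∈ Set.Icc (0 : ℝ) 1)
    (hΓdiag : ∀ i, Γ i i = 0)
    (hΓrow : ∀ i, ∃ j, j ≠ i ∧ 0 < Γ i j)
    (η : Fin n → ℝ) (hη : η = Γ.mulVec fun _ => 1)
    (L : Matrix (Fin n) (Fin n) ℝ) (hL : L = Matrix.diagonal η - Γ)
    (emb : Fin (n - 1) → Fin n) (hemb : ∀ i, (emb i : ℕ) = (i : ℕ) + 1)
    (S : Matrix (Fin (n - 1)) (Fin (n - 1)) ℝ) (hS : S = L.submatrix emb emb) :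
    S.mulVec (fun _ => 1) = (fun i => Γ (emb i) 0) ∧
      ∀ z ∈ spectrum ℝ S, (⨅ i : Fin (n - 1), Γ (emb i) 0) ≤ z := by
  obtain _ | m := n
  · omega
  have hemb' : emb = Fin.succ := funext fun i => Fin.ext (by simpa using hemb i)
  have hrow : S.mulVec (fun _ => 1) = fun i => Γ (emb i) 0 := by
    subst hS hL hη hemb'
    funext i
    simp only [Matrix.mulVec, dotProduct, mul_one, Matrix.submatrix_apply, Matrix.sub_apply,
      Matrix.diagonal_apply, Fin.succ_inj, Finset.sum_sub_distrib,
      Finset.sum_ite_eq, Finset.mem_univ, if_true]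
    rw [Fin.sum_univ_succ]
    exact add_sub_cancel_right _ _
  refine ⟨hrow, fun z hz => ?_⟩
  have hoff : ∀ i j, i ≠ j → S i j ≤ 0 := by
    subst hS hL hemb'
    intro i j hij
    have hne : Fin.succ i ≠ Fin.succ j := fun h => hij (Fin.succ_injective _ h)
    rw [Matrix.submatrix_apply, Matrix.sub_apply, Matrix.diagonal_apply_ne _ hne]
    linarith [(hΓrange (Fin.succ i) (Fin.succ j)).1]
  obtain ⟨k, hk⟩ := exists_rowSum_le_of_mem_spectrum S hoff hz
  rw [hrow] at hk
  exact (ciInf_le (Set.finite_range _).bddBelow k).trans hk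
end

section
/- Assume additionally that Γ_{i,1} > 0 for every i ∈ {2,…,n}. Let S be the (n−1)×(n−1) matrix obtained from L by deleting its first row and column, let u := (Γ_{2,1}, …, Γ_{n,1}) ∈ ℝ^{n−1}, and let E := S + u·1_{n−1}ᵀ (a rank-one perturbation of S). Then every complex eigenvalue z of E is real and satisfies z ≥ min_{i ∈ {2,…,n}} Γ_{i,1}. -/
open Matrix

/-!
Deleting row and column `1` from the Laplacian leaves `S = diag(u) + L'`, where `L'` is the Laplacian
of the remaining weights, and `S·1 = u`. Hence `E = S (I + 1·1ᵀ)`, a product of two positive definite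
matrices. If `E v = z v` and `w = v + (∑ v)·1 = (I + 1·1ᵀ) v`, then pairing with `w` gives
`w* S w = z · (|v|² + |∑ v|²)`. The left side is the Dirichlet form
`∑ u_i |w_i|² + ½ ∑ W_ij |w_i - w_j|²`, which is real and at least `(min u) |w|²`, while
`|w|² ≥ |v|² + |∑ v|² > 0`. So `z` is real and at least `min u`.
-/

/-- The weighted Laplacian form, symmetrized into a sum of squares. -/
lemma dirichlet_form {ι : Type*} [Fintype ι] (W : ι → ι → ℝ) (hW : ∀ i j, W i j = W j i)
    (w : ι → ℂ) :
    ∑ i, (starRingEnd ℂ) (w i) * ∑ j, (W i j : ℂ) * (w i - w j) =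
      (((1 / 2 : ℝ) * ∑ i, ∑ j, W i j * Complex.normSq (w i - w j) : ℝ) : ℂ) := by
  have h1 : ∑ i, (starRingEnd ℂ) (w i) * ∑ j, (W i j : ℂ) * (w i - w j) =
      ∑ i, ∑ j, (starRingEnd ℂ) (w i) * ((W i j : ℂ) * (w i - w j)) := by
    simp only [Finset.mul_sum]
  have h2 : ∑ i, ∑ j, (starRingEnd ℂ) (w i) * ((W i j : ℂ) * (w i - w j)) =
      ∑ i, ∑ j, (starRingEnd ℂ) (w j) * ((W i j : ℂ) * (w j - w i)) := by
    rw [Finset.sum_comm]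
    refine Finset.sum_congr rfl fun i _ => Finset.sum_congr rfl fun j _ => ?_
    rw [hW j i]
  have h3 : ∑ i, ∑ j, (starRingEnd ℂ) (w i) * ((W i j : ℂ) * (w i - w j)) +
      ∑ i, ∑ j, (starRingEnd ℂ) (w j) * ((W i j : ℂ) * (w j - w i)) =
      ((∑ i, ∑ j, W i j * Complex.normSq (w i - w j) : ℝ) : ℂ) := by
    push_cast
    simp only [← Finset.sum_add_distrib]
    refine Finset.sum_congr rfl fun i _ => Finset.sum_congr rfl fun j _ => ?_
    rw [Complex.normSq_eq_conj_mul_self, map_sub]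
    ring
  rw [← h2] at h3
  rw [h1, Complex.ofReal_mul, ← h3]
  push_cast
  ring

/-- The eigenvalue bound in coordinates: the hypothesis `h` is `E v = z v`, with
`E = diag(u) + L' + u·1ᵀ` and `L'` the Laplacian of the weights `W`. -/
lemma eigen_bound {ι : Type*} [Fintype ι] (W : ι → ι → ℝ) (hW : ∀ i j, W i j = W j i)
    (hW0 : ∀ i j, 0 ≤ W i j) (u : ι → ℝ) (m : ℝ) (hm : 0 ≤ m) (hu : ∀ i, m ≤ u i)
    (z : ℂ) (v : ι → ℂ) (hv : v ≠ 0)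
    (h : ∀ i, (u i : ℂ) * (v i + ∑ j, v j) + ∑ j, (W i j : ℂ) * (v i - v j) = z * v i) :
    z.im = 0 ∧ m ≤ z.re := by
  set s := ∑ j, v j with hs
  set D : ℝ := ∑ i, Complex.normSq (v i) + Complex.normSq s with hD
  have hDpos : 0 < D := by
    obtain ⟨i, hi⟩ := Function.ne_iff.mp hv
    have h1 : 0 < ∑ i, Complex.normSq (v i) :=
      Finset.sum_pos' (fun _ _ => Complex.normSq_nonneg _)
        ⟨i, Finset.mem_univ _, Complex.normSq_pos.mpr hi⟩
    have := Complex.normSq_nonneg s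
    linarith
  set R : ℝ := ∑ i, u i * Complex.normSq (v i + s) +
    (1 / 2 : ℝ) * ∑ i, ∑ j, W i j * Complex.normSq (v i - v j) with hR
  have key : (R : ℂ) = z * (D : ℂ) := by
    have e1 : ∑ i, (starRingEnd ℂ) (v i + s) *
        ((u i : ℂ) * (v i + s) + ∑ j, (W i j : ℂ) * (v i - v j)) =
        ∑ i, (starRingEnd ℂ) (v i + s) * (z * v i) :=
      Finset.sum_congr rfl fun i _ => by rw [h i]
    have e2 : ∑ i, (starRingEnd ℂ) (v i + s) * (z * v i) = z * (D : ℂ) := by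
      have : ∀ i, (starRingEnd ℂ) (v i + s) * (z * v i) =
          z * ((Complex.normSq (v i) : ℂ)) + z * (starRingEnd ℂ) s * v i := by
        intro i
        rw [Complex.normSq_eq_conj_mul_self, map_add]
        ring
      simp only [this]
      rw [Finset.sum_add_distrib, ← Finset.mul_sum, ← Finset.mul_sum, ← hs, hD]
      push_cast
      rw [Complex.normSq_eq_conj_mul_self (z := s)]
      ring
    have e3 := dirichlet_form W hW (fun i => v i + s)
    simp only [add_sub_add_right_eq_sub] at e3
    rw [← e2, ← e1]
    simp only [mul_add (starRingEnd ℂ _)]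
    rw [Finset.sum_add_distrib, e3, hR, Complex.ofReal_add]
    congr 1
    push_cast
    refine Finset.sum_congr rfl fun i _ => ?_
    rw [Complex.normSq_eq_conj_mul_self]
    ring
  have hre : R = z.re * D := by simpa using congrArg Complex.re key
  have him : 0 = z.im * D := by simpa using congrArg Complex.im key
  have hwD : D ≤ ∑ i, Complex.normSq (v i + s) := by
    have e : ∑ i, (v i * (starRingEnd ℂ) s).re = Complex.normSq s := by
      rw [← Complex.re_sum, ← Finset.sum_mul, ← hs, Complex.mul_conj, Complex.ofReal_re]
    have e' : 0 ≤ ∑ _i : ι, Complex.normSq s :=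
      Finset.sum_nonneg fun _ _ => Complex.normSq_nonneg _
    simp only [Complex.normSq_add, Finset.sum_add_distrib, ← Finset.mul_sum]
    rw [e]
    have := Complex.normSq_nonneg s
    linarith
  have hmR : m * D ≤ R := by
    have a1 : m * D ≤ m * ∑ i, Complex.normSq (v i + s) := mul_le_mul_of_nonneg_left hwD hm
    have a2 : m * ∑ i, Complex.normSq (v i + s) ≤ ∑ i, u i * Complex.normSq (v i + s) := by
      rw [Finset.mul_sum]
      exact Finset.sum_le_sum fun i _ =>
        mul_le_mul_of_nonneg_right (hu i) (Complex.normSq_nonneg _)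
    have a3 : 0 ≤ ∑ i, ∑ j, W i j * Complex.normSq (v i - v j) :=
      Finset.sum_nonneg fun i _ => Finset.sum_nonneg fun j _ =>
        mul_nonneg (hW0 i j) (Complex.normSq_nonneg _)
    linarith
  refine ⟨?_, ?_⟩
  · rcases mul_eq_zero.mp him.symm with h0 | h0
    · exact h0
    · exact absurd h0 hDpos.ne'
  · rw [hre] at hmR
    exact le_of_mul_le_mul_right hmR hDpos

/-- with `Γ_{i,1} > 0` for `i ∈ {2,…,n}`, the rank-one
perturbation `E = S + u·1ᵀ` (with `u = (Γ₂₁,…,Γₙ₁)`) has only real complex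
eigenvalues, and each is at least `min_{i ∈ {2,…,n}} Γ_{i,1}`. -/
theorem stmt12 (n : ℕ) [NeZero n] (hn : 2 ≤ n)
    (Γ : Matrix (Fin n) (Fin n) ℝ) (hΓsymm : Γ.IsSymm)
    (hΓrange : ∀ i j, Γ i j ∈ Set.Icc (0 : ℝ) 1)
    (hΓdiag : ∀ i, Γ i i = 0)
    (hΓrow : ∀ i, ∃ j, j ≠ i ∧ 0 < Γ i j)
    (hΓcol : ∀ i : Fin n, i ≠ 0 → 0 < Γ i 0)
    (η : Fin n → ℝ) (hη : η = Γ.mulVec fun _ => 1)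
    (L : Matrix (Fin n) (Fin n) ℝ) (hL : L = Matrix.diagonal η - Γ)
    (emb : Fin (n - 1) → Fin n) (hemb : ∀ i, (emb i : ℕ) = (i : ℕ) + 1)
    (S : Matrix (Fin (n - 1)) (Fin (n - 1)) ℝ) (hS : S = L.submatrix emb emb)
    (E : Matrix (Fin (n - 1)) (Fin (n - 1)) ℝ)
    (hE : E = S + Matrix.of fun i _ => Γ (emb i) 0) :
    ∀ z ∈ spectrum ℂ (E.map fun x => (x : ℂ)),
      z.im = 0 ∧ (⨅ i : Fin (n - 1), Γ (emb i) 0) ≤ z.re := by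
  intro z hz
  obtain ⟨k, rfl⟩ : ∃ k, n = k + 1 := ⟨n - 1, by omega⟩
  change Fin k → Fin (k + 1) at emb
  have hemb' : emb = Fin.succ := by
    funext i
    apply Fin.ext
    rw [hemb i]
    rfl
  rw [spectrum.mem_iff, Matrix.isUnit_iff_isUnit_det, isUnit_iff_ne_zero, not_not] at hz
  obtain ⟨v, hv, hzv⟩ := Matrix.exists_mulVec_eq_zero_iff.mpr hz
  refine eigen_bound (fun i j => Γ (emb i) (emb j)) (fun i j => (hΓsymm.apply _ _).symm)
    (fun i j => (hΓrange _ _).1) (fun i => Γ (emb i) 0) _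
    (Real.iInf_nonneg fun i => (hΓrange _ _).1)
    (fun i => ciInf_le (Set.finite_range _).bddBelow i) z v hv ?_
  intro i
  have hrow : η (emb i) = Γ (emb i) 0 + ∑ j : Fin k, Γ (emb i) (emb j) := by
    rw [hη, hemb']
    simp only [Matrix.mulVec, dotProduct, mul_one]
    exact Fin.sum_univ_succ _
  have hEv : ∑ j : Fin k, (E i j : ℂ) * v j = z * v i := by
    have := congrFun hzv i
    rw [Matrix.sub_mulVec, Pi.sub_apply, Matrix.algebraMap_eq_diagonal,
      Matrix.mulVec_diagonal] at this
    exact (sub_eq_zero.mp this).symm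
  have hEij : ∀ j : Fin k, (E i j : ℂ) * v j = (if i = j then (η (emb i) : ℂ) * v j else 0)
      - (Γ (emb i) (emb j) : ℂ) * v j + (Γ (emb i) 0 : ℂ) * v j := by
    intro j
    have hinj : emb i = emb j ↔ i = j := by rw [hemb']; exact Fin.succ_inj
    simp only [hE, hS, hL, Matrix.add_apply, Matrix.submatrix_apply, Matrix.sub_apply,
      Matrix.diagonal_apply, Matrix.of_apply, hinj]
    split_ifs <;> push_cast <;> ring
  rw [← hEv]
  change (Γ (emb i) 0 : ℂ) * (v i + ∑ j : Fin k, v j) +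
    ∑ j : Fin k, (Γ (emb i) (emb j) : ℂ) * (v i - v j) = _
  rw [Finset.sum_congr rfl fun j _ => hEij j]
  simp only [Finset.sum_add_distrib, Finset.sum_sub_distrib, Finset.sum_ite_eq, Finset.mem_univ,
    if_true, mul_sub, hrow, ← Finset.mul_sum, ← Finset.sum_mul]
  push_cast
  ring
end

section
/- Assume additionally that Γ_{i,1} > 0 for every i ∈ {2,…,n}. Then for every u ∈ ℝⁿ orthogonal to the all-ones vector 1_n one has ⟨u, A·u⟩ ≥ (λ + μ·min_{i ∈ {2,…,n}} Γ_{i,1})·‖u‖²; equivalently, the second-smallest eigenvalue a(A) of A satisfies a(A) ≥ λ + μ·min_{i ∈ {2,…,n}} Γ_{i,1}. -/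
/-!
The Dirichlet form of the Laplacian is `⟨u, L u⟩ = ½ ∑ i j, Γ i j (u i - u j)²`. All its terms are
nonnegative, so keeping only the star of edges at the first vertex gives
`⟨u, L u⟩ ≥ ∑ i, Γ i 0 (u i - u 0)² ≥ m ∑ i, (u i - u 0)²`, where `m` is the minimum of the edge
weights of the star. If `∑ u = 0`, the last sum equals `‖u‖² + n (u 0)² ≥ ‖u‖²`.
-/

open Matrix

/-- The Laplacian as a Dirichlet form. -/
lemma two_mul_dotProduct_laplacian {n : ℕ} (Γ : Matrix (Fin n) (Fin n) ℝ) (hs : Γ.IsSymm)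
    (u : Fin n → ℝ) :
    2 * (u ⬝ᵥ (Matrix.diagonal (Γ.mulVec fun _ => 1) - Γ).mulVec u)
      = ∑ i, ∑ j, Γ i j * (u i - u j) ^ 2 := by
  have h1 : u ⬝ᵥ (Matrix.diagonal (Γ.mulVec fun _ => 1) - Γ).mulVec u
      = ∑ i, ∑ j, Γ i j * u i ^ 2 - ∑ i, ∑ j, Γ i j * (u i * u j) := by
    rw [Matrix.sub_mulVec, dotProduct_sub]
    congr 1
    · simp only [dotProduct, Matrix.mulVec_diagonal]
      simp only [Matrix.mulVec, dotProduct, mul_one]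
      refine Finset.sum_congr rfl fun i _ => ?_
      rw [← Finset.sum_mul]
      ring
    · simp only [dotProduct, Matrix.mulVec, Finset.mul_sum]
      exact Finset.sum_congr rfl fun i _ => Finset.sum_congr rfl fun j _ => by ring
  have h2 : ∑ i, ∑ j, Γ i j * u j ^ 2 = ∑ i, ∑ j, Γ i j * u i ^ 2 := by
    rw [Finset.sum_comm]
    exact Finset.sum_congr rfl fun i _ => Finset.sum_congr rfl fun j _ => by rw [hs.apply]
  have h3 : ∑ i, ∑ j, Γ i j * (u i - u j) ^ 2 = ∑ i, ∑ j, Γ i j * u i ^ 2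
      + ∑ i, ∑ j, Γ i j * u j ^ 2 - 2 * ∑ i, ∑ j, Γ i j * (u i * u j) := by
    simp only [Finset.mul_sum, ← Finset.sum_add_distrib, ← Finset.sum_sub_distrib]
    exact Finset.sum_congr rfl fun i _ => Finset.sum_congr rfl fun j _ => by ring
  rw [h1, h3, h2]
  ring

/-- Discarding all edges outside the star of the vertex `0` can only decrease the Dirichlet
form; each edge of the star is counted twice in the double sum. -/
lemma two_mul_star_le {n : ℕ} [NeZero n] (Γ : Matrix (Fin n) (Fin n) ℝ) (hs : Γ.IsSymm)
    (h0 : ∀ i j, 0 ≤ Γ i j) (u : Fin n → ℝ) :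
    2 * ∑ i, Γ i 0 * (u i - u 0) ^ 2 ≤ ∑ i, ∑ j, Γ i j * (u i - u j) ^ 2 := by
  have key : ∀ i j, (if j = 0 then Γ i 0 * (u i - u 0) ^ 2 else 0)
      + (if i = 0 then Γ j 0 * (u j - u 0) ^ 2 else 0) ≤ Γ i j * (u i - u j) ^ 2 := by
    intro i j
    have hp := mul_nonneg (h0 i j) (sq_nonneg (u i - u j))
    by_cases hi : i = 0 <;> by_cases hj : j = 0
    · subst hi hj; simp
    · subst hi
      simp only [hj, if_true, if_false, zero_add]
      rw [hs.apply]
      apply le_of_eq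
      ring
    · subst hj; simp [hi]
    · simpa [hi, hj] using hp
  calc 2 * ∑ i, Γ i 0 * (u i - u 0) ^ 2
      = ∑ i, ∑ j, ((if j = 0 then Γ i 0 * (u i - u 0) ^ 2 else 0)
        + (if i = 0 then Γ j 0 * (u j - u 0) ^ 2 else 0)) := by
        simp only [Finset.sum_add_distrib]
        rw [Finset.sum_comm (f := fun i j => if i = 0 then Γ j 0 * (u j - u 0) ^ 2 else 0)]
        simp [two_mul]
    _ ≤ _ := Finset.sum_le_sum fun i _ => Finset.sum_le_sum fun j _ => key i j

/-- Recentring a mean-zero vector at one of its entries does not decrease its norm. -/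
lemma dotProduct_self_le_sum_sub_sq {n : ℕ} (u : Fin n → ℝ) (hu : ∑ i, u i = 0) (c : ℝ) :
    u ⬝ᵥ u ≤ ∑ i, (u i - c) ^ 2 := by
  have h : ∑ i, (u i - c) ^ 2 = u ⬝ᵥ u - 2 * c * ∑ i, u i + n * c ^ 2 := by
    have hn : (n : ℝ) * c ^ 2 = ∑ _i : Fin n, c ^ 2 := by simp
    rw [hn, dotProduct, Finset.mul_sum, ← Finset.sum_sub_distrib, ← Finset.sum_add_distrib]
    exact Finset.sum_congr rfl fun i _ => by ring
  rw [h, hu]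
  have : 0 ≤ (n : ℝ) * c ^ 2 := by positivity
  linarith

/-- with `Γ_{i,1} > 0` for `i ∈ {2,…,n}`, every `u ⟂ 1ₙ`
satisfies `⟨u, A u⟩ ≥ (λ + μ min_{i ∈ {2,…,n}} Γ_{i,1}) ‖u‖²`. -/
theorem stmt13 (n : ℕ) [NeZero n] (hn : 2 ≤ n)
    (lam mu : ℝ) (hlam : 0 < lam) (hmu : 0 < mu)
    (Γ : Matrix (Fin n) (Fin n) ℝ) (hΓsymm : Γ.IsSymm)
    (hΓrange : ∀ i j, Γ i j ∈ Set.Icc (0 : ℝ) 1)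
    (hΓdiag : ∀ i, Γ i i = 0)
    (hΓrow : ∀ i, ∃ j, j ≠ i ∧ 0 < Γ i j)
    (hΓcol : ∀ i : Fin n, i ≠ 0 → 0 < Γ i 0)
    (η : Fin n → ℝ) (hη : η = Γ.mulVec fun _ => 1)
    (L : Matrix (Fin n) (Fin n) ℝ) (hL : L = Matrix.diagonal η - Γ)
    (A : Matrix (Fin n) (Fin n) ℝ)
    (hA : A = lam • (1 : Matrix (Fin n) (Fin n) ℝ) + mu • L)
    (emb : Fin (n - 1) → Fin n) (hemb : ∀ i, (emb i : ℕ) = (i : ℕ) + 1) :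
    ∀ u : Fin n → ℝ, (∑ i, u i) = 0 →
      (lam + mu * ⨅ i : Fin (n - 1), Γ (emb i) 0) * (u ⬝ᵥ u) ≤ u ⬝ᵥ A.mulVec u := by
  intro u hu
  set m := ⨅ i : Fin (n - 1), Γ (emb i) 0 with hm
  have hm0 : 0 ≤ m := Real.iInf_nonneg fun i => (hΓrange _ _).1
  have hmle : ∀ i : Fin n, i ≠ 0 → m ≤ Γ i 0 := by
    intro i hi
    have hi' : (i : ℕ) ≠ 0 := fun h => hi (Fin.ext (by simpa using h))
    have he : emb ⟨i - 1, by omega⟩ = i := Fin.ext (by rw [hemb]; simp only; omega)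
    have := ciInf_le (f := fun i : Fin (n - 1) => Γ (emb i) 0)
      ⟨0, by rintro _ ⟨j, rfl⟩; exact (hΓrange _ _).1⟩ ⟨i - 1, by omega⟩
    simpa only [he] using this
  have hstar : m * ∑ i, (u i - u 0) ^ 2 ≤ ∑ i, Γ i 0 * (u i - u 0) ^ 2 := by
    rw [Finset.mul_sum]
    refine Finset.sum_le_sum fun i _ => ?_
    by_cases hi : i = 0
    · subst hi; simp
    · exact mul_le_mul_of_nonneg_right (hmle i hi) (sq_nonneg _)
  have hL' : m * (u ⬝ᵥ u) ≤ u ⬝ᵥ L.mulVec u := by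
    have h1 := two_mul_dotProduct_laplacian Γ hΓsymm u
    have h2 := two_mul_star_le Γ hΓsymm (fun i j => (hΓrange i j).1) u
    have h3 := mul_le_mul_of_nonneg_left (dotProduct_self_le_sum_sub_sq u hu (u 0)) hm0
    rw [hL, hη]
    linarith
  have hA' : u ⬝ᵥ A.mulVec u = lam * (u ⬝ᵥ u) + mu * (u ⬝ᵥ L.mulVec u) := by
    rw [hA, Matrix.add_mulVec, Matrix.smul_mulVec, Matrix.smul_mulVec, Matrix.one_mulVec,
      dotProduct_add, dotProduct_smul, dotProduct_smul, smul_eq_mul, smul_eq_mul]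
  rw [hA']
  have := mul_le_mul_of_nonneg_left hL' hmu.le
  linarith
end

section
/- For every nonzero x ∈ ℝⁿ, the generalized Rayleigh quotient satisfies λ/(λ + μ·max_i η_i) ≤ ⟨x, A·x⟩/⟨x, P_a·x⟩ ≤ min{2, λ_max(L)/min_i η_i}, where λ_max(L) is the largest eigenvalue of L (note min_i η_i > 0 under the stated assumptions, and λ_max(L)/min_i η_i ≥ 1). In particular all eigenvalues of the Jacobi-preconditioned matrix P_a⁻¹A lie in this interval. -/
/-!
Everything follows from three bounds on quadratic forms, with `D = diag η`:
`0 ≤ ⟨x, L x⟩ ≤ 2 ⟨x, D x⟩`, since `⟨x, (D ∓ Γ) x⟩ = ½ ∑ᵢⱼ Γᵢⱼ (xᵢ ∓ xⱼ)²`, and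
`⟨x, L x⟩ ≤ λ_max(L) ⟨x, x⟩`, since `λ_max(L) I - L` is Hermitian with nonnegative spectrum.
Together with `min η ⟨x, x⟩ ≤ ⟨x, D x⟩ ≤ max η ⟨x, x⟩` they bound the quotient. Testing the
third bound on a basis vector gives `λ_max(L) ≥ Lᵢᵢ = ηᵢ`, hence `λ_max(L) / min η ≥ 1`, which is
needed to compare the `λ` terms. Finally, an eigenpair `P⁻¹ A v = k v` has Rayleigh quotient `k`
at `v`.
-/

open Matrix

/-- The Laplacian (`s = -1`) and signless Laplacian (`s = 1`) forms are sums of squares. -/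
lemma two_mul_quadForm {n : ℕ} (Γ : Matrix (Fin n) (Fin n) ℝ) (hs : Γ.IsSymm)
    (s : ℝ) (h_s : s ^ 2 = 1) (x : Fin n → ℝ) :
    2 * (x ⬝ᵥ (Matrix.diagonal (Γ.mulVec fun _ => 1)).mulVec x + s * (x ⬝ᵥ Γ.mulVec x)) =
      ∑ i, ∑ j, Γ i j * (x i + s * x j) ^ 2 := by
  have h1 : x ⬝ᵥ (Matrix.diagonal (Γ.mulVec fun _ => 1)).mulVec x
      = ∑ i, ∑ j, Γ i j * x i ^ 2 := by
    simp only [dotProduct, Matrix.mulVec_diagonal]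
    refine Finset.sum_congr rfl fun i _ => ?_
    simp only [Matrix.mulVec, dotProduct, mul_one, ← Finset.sum_mul]
    ring
  have h2 : x ⬝ᵥ Γ.mulVec x = ∑ i, ∑ j, Γ i j * (x i * x j) := by
    simp only [dotProduct, Matrix.mulVec, Finset.mul_sum]
    exact Finset.sum_congr rfl fun i _ => Finset.sum_congr rfl fun j _ => by ring
  have h3 : ∑ i, ∑ j, Γ i j * x i ^ 2 = ∑ i, ∑ j, Γ i j * x j ^ 2 := by
    rw [Finset.sum_comm]
    exact Finset.sum_congr rfl fun i _ => Finset.sum_congr rfl fun j _ => by rw [hs.apply]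
  have h4 : ∑ i, ∑ j, Γ i j * (x i + s * x j) ^ 2 = ∑ i, ∑ j, Γ i j * x i ^ 2 +
      ∑ i, ∑ j, Γ i j * x j ^ 2 + 2 * s * ∑ i, ∑ j, Γ i j * (x i * x j) := by
    simp only [Finset.mul_sum, ← Finset.sum_add_distrib]
    refine Finset.sum_congr rfl fun i _ => Finset.sum_congr rfl fun j _ => ?_
    linear_combination Γ i j * x j ^ 2 * h_s
  rw [h4, ← h3, h1, h2]
  ring

lemma quadForm_le_sSup_spectrum {n : ℕ} (L : Matrix (Fin n) (Fin n) ℝ) (hL : L.IsHermitian)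
    (x : Fin n → ℝ) : x ⬝ᵥ L.mulVec x ≤ sSup (spectrum ℝ L) * (x ⬝ᵥ x) := by
  set M := sSup (spectrum ℝ L) with hM
  have hps : (algebraMap ℝ (Matrix (Fin n) (Fin n) ℝ) M - L).PosSemidef := by
    rw [Matrix.posSemidef_iff_isHermitian_and_spectrum_nonneg]
    refine ⟨?_, ?_⟩
    · rw [Algebra.algebraMap_eq_smul_one]
      refine Matrix.IsHermitian.sub ?_ hL
      simp [Matrix.IsHermitian]
    · rw [← spectrum.singleton_sub_eq]
      rintro _ ⟨_, rfl, k, hk, rfl⟩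
      exact sub_nonneg.2 (le_csSup (Matrix.finite_real_spectrum (A := L)).bddAbove hk)
  have h := hps.dotProduct_mulVec_nonneg x
  simp only [star_trivial, Algebra.algebraMap_eq_smul_one, Matrix.sub_mulVec, Matrix.smul_mulVec,
    Matrix.one_mulVec, dotProduct_sub, dotProduct_smul, smul_eq_mul] at h
  linarith

/-- the generalized Rayleigh quotient of `A` w.r.t. the Jacobi
preconditioner `P_a = λI + μ diag(η)` satisfies
`λ/(λ + μ max η) ≤ ⟨x,Ax⟩/⟨x,P_a x⟩ ≤ min {2, λ_max(L)/min η}` for all `x ≠ 0`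
(with `min η > 0` and `λ_max(L)/min η ≥ 1`); in particular all eigenvalues of
`P_a⁻¹ A` lie in this interval. -/
theorem stmt14 (n : ℕ) (hn : 2 ≤ n)
    (lam mu : ℝ) (hlam : 0 < lam) (hmu : 0 < mu)
    (Γ : Matrix (Fin n) (Fin n) ℝ) (hΓsymm : Γ.IsSymm)
    (hΓrange : ∀ i j, Γ i j ∈ Set.Icc (0 : ℝ) 1)
    (hΓdiag : ∀ i, Γ i i = 0)
    (hΓrow : ∀ i, ∃ j, j ≠ i ∧ 0 < Γ i j)
    (η : Fin n → ℝ) (hη : η = Γ.mulVec fun _ => 1)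
    (L : Matrix (Fin n) (Fin n) ℝ) (hL : L = Matrix.diagonal η - Γ)
    (A : Matrix (Fin n) (Fin n) ℝ)
    (hA : A = lam • (1 : Matrix (Fin n) (Fin n) ℝ) + mu • L)
    (Pa : Matrix (Fin n) (Fin n) ℝ)
    (hPa : Pa = lam • (1 : Matrix (Fin n) (Fin n) ℝ) + mu • Matrix.diagonal η) :
    (0 < ⨅ i, η i) ∧
    (1 ≤ sSup (spectrum ℝ L) / ⨅ i, η i) ∧
    (∀ x : Fin n → ℝ, x ≠ 0 →
      lam / (lam + mu * ⨆ i, η i) ≤ (x ⬝ᵥ A.mulVec x) / (x ⬝ᵥ Pa.mulVec x) ∧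
      (x ⬝ᵥ A.mulVec x) / (x ⬝ᵥ Pa.mulVec x) ≤
        min 2 (sSup (spectrum ℝ L) / ⨅ i, η i)) ∧
    spectrum ℝ (Pa⁻¹ * A) ⊆
      Set.Icc (lam / (lam + mu * ⨆ i, η i)) (min 2 (sSup (spectrum ℝ L) / ⨅ i, η i)) := by
  have : Nonempty (Fin n) := ⟨⟨0, by omega⟩⟩
  have hle : ∀ i, (⨅ i, η i) ≤ η i := fun i => ciInf_le (Set.finite_range η).bddBelow i
  have hge : ∀ i, η i ≤ ⨆ i, η i := fun i => le_ciSup (Set.finite_range η).bddAbove i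
  have hpos : ∀ i, 0 < η i := by
    intro i
    obtain ⟨j, -, hj⟩ := hΓrow i
    simp only [hη, Matrix.mulVec, dotProduct, mul_one]
    exact Finset.sum_pos' (fun k _ => (hΓrange i k).1) ⟨j, Finset.mem_univ j, hj⟩
  obtain ⟨i₀, hi₀⟩ := exists_eq_ciInf_of_finite (f := η)
  have hm : 0 < ⨅ i, η i := hi₀ ▸ hpos i₀
  set m := ⨅ i, η i with hmdef
  set S := ⨆ i, η i with hSdef
  have hS : 0 < S := (hpos i₀).trans_le (hge i₀)
  have hLH : L.IsHermitian := by
    rw [hL]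
    refine (Matrix.isHermitian_diagonal η).sub ?_
    rw [Matrix.IsHermitian, Matrix.conjTranspose_eq_transpose_of_trivial]
    exact hΓsymm
  have hray := quadForm_le_sSup_spectrum L hLH
  set M := sSup (spectrum ℝ L) with hMdef
  -- The basis vector at a minimising index has quotient `L i₀ i₀ = m`, as `Γ i₀ i₀ = 0`.
  have hmM : m ≤ M := by
    have h := hray (Pi.single i₀ 1)
    simpa [hL, hΓdiag, hi₀] using h
  have hr : 1 ≤ M / m := (one_le_div hm).2 hmM
  have hD : ∀ x : Fin n → ℝ,
      x ⬝ᵥ (Matrix.diagonal η).mulVec x = ∑ i, η i * (x i * x i) := fun x => by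
    simp only [dotProduct, Matrix.mulVec_diagonal]
    exact Finset.sum_congr rfl fun i _ => by ring
  have hmain : ∀ x : Fin n → ℝ, x ≠ 0 → 0 < x ⬝ᵥ Pa.mulVec x ∧
      lam / (lam + mu * S) ≤ (x ⬝ᵥ A.mulVec x) / (x ⬝ᵥ Pa.mulVec x) ∧
      (x ⬝ᵥ A.mulVec x) / (x ⬝ᵥ Pa.mulVec x) ≤ min 2 (M / m) := by
    intro x hx
    have hxx : 0 < x ⬝ᵥ x := by simpa using Matrix.dotProduct_star_self_pos_iff.2 hx
    have hDlo : m * (x ⬝ᵥ x) ≤ x ⬝ᵥ (Matrix.diagonal η).mulVec x := by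
      rw [hD, dotProduct, Finset.mul_sum]
      exact Finset.sum_le_sum fun i _ => mul_le_mul_of_nonneg_right (hle i) (mul_self_nonneg _)
    have hDhi : x ⬝ᵥ (Matrix.diagonal η).mulVec x ≤ S * (x ⬝ᵥ x) := by
      rw [hD, dotProduct, Finset.mul_sum]
      exact Finset.sum_le_sum fun i _ => mul_le_mul_of_nonneg_right (hge i) (mul_self_nonneg _)
    have hsq : ∀ s : ℝ, 0 ≤ ∑ i, ∑ j, Γ i j * (x i + s * x j) ^ 2 := fun s =>
      Finset.sum_nonneg fun i _ => Finset.sum_nonneg fun j _ =>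
        mul_nonneg (hΓrange i j).1 (sq_nonneg _)
    have hminus := hsq (-1)
    have hplus := hsq 1
    rw [← two_mul_quadForm Γ hΓsymm _ (by norm_num), ← hη] at hminus hplus
    have hLx : x ⬝ᵥ L.mulVec x = x ⬝ᵥ (Matrix.diagonal η).mulVec x - x ⬝ᵥ Γ.mulVec x := by
      rw [hL, Matrix.sub_mulVec, dotProduct_sub]
    have hAx : x ⬝ᵥ A.mulVec x = lam * (x ⬝ᵥ x) + mu * (x ⬝ᵥ L.mulVec x) := by
      simp [hA, Matrix.add_mulVec, Matrix.smul_mulVec]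
    have hPx : x ⬝ᵥ Pa.mulVec x =
        lam * (x ⬝ᵥ x) + mu * (x ⬝ᵥ (Matrix.diagonal η).mulVec x) := by
      rw [hPa, Matrix.add_mulVec, Matrix.smul_mulVec, Matrix.smul_mulVec, Matrix.one_mulVec,
        dotProduct_add, dotProduct_smul, dotProduct_smul, smul_eq_mul, smul_eq_mul]
    have hrx := hray x
    set q := x ⬝ᵥ x
    set d := x ⬝ᵥ (Matrix.diagonal η).mulVec x
    set l := x ⬝ᵥ L.mulVec x
    have hl0 : 0 ≤ l := by linarith
    have hl2 : l ≤ 2 * d := by linarith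
    have hd0 : 0 ≤ d := (mul_pos hm hxx).le.trans hDlo
    have hlr : l ≤ M / m * d := calc
      l ≤ M * q := hrx
      _ = M / m * (m * q) := by field_simp
      _ ≤ M / m * d := mul_le_mul_of_nonneg_left hDlo (by linarith)
    have hlq : 0 < lam * q := mul_pos hlam hxx
    have hP0 : 0 < lam * q + mu * d := add_pos_of_pos_of_nonneg hlq (by positivity)
    rw [hAx, hPx]
    refine ⟨hP0, ?_, le_min ?_ ?_⟩
    · rw [div_le_div_iff₀ (by positivity) hP0]
      have h1 : mu * d ≤ mu * (S * q) := mul_le_mul_of_nonneg_left hDhi hmu.le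
      have h2 : 0 ≤ mu * l * (lam + mu * S) := by positivity
      have h3 := mul_le_mul_of_nonneg_left h1 hlam.le
      linarith
    · rw [div_le_iff₀ hP0]
      have := mul_le_mul_of_nonneg_left hl2 hmu.le
      linarith
    · rw [div_le_iff₀ hP0]
      have h1 := mul_le_mul_of_nonneg_left hlr hmu.le
      have h2 := mul_le_mul_of_nonneg_right hr hlq.le
      linarith
  refine ⟨hm, hr, fun x hx => (hmain x hx).2, ?_⟩
  intro k hk
  rw [← Matrix.spectrum_toLin', ← Module.End.hasEigenvalue_iff_mem_spectrum] at hk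
  obtain ⟨v, hv⟩ := hk.exists_hasEigenvector
  have hPu : IsUnit Pa.det := by
    rw [isUnit_iff_ne_zero]
    intro h0
    obtain ⟨w, hw, hw0⟩ := Matrix.exists_mulVec_eq_zero_iff.2 h0
    have := (hmain w hw).1
    simp [hw0] at this
  have hAv : A.mulVec v = k • Pa.mulVec v := by
    have h := hv.apply_eq_smul
    rw [Matrix.toLin'_apply] at h
    rw [← Matrix.mulVec_smul, ← h, Matrix.mulVec_mulVec, Matrix.mul_nonsing_inv_cancel_left _ _ hPu]
  obtain ⟨h1, h2⟩ := hmain v hv.2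
  rwa [hAv, dotProduct_smul, smul_eq_mul, mul_div_cancel_right₀ _ h1.ne'] at h2
end

section
/- For every index i ∈ {1,…,n}, the diagonal entries satisfy (P_a)_{ii} ≤ (P_b)_{ii} ≤ √2·(P_a)_{ii}; consequently, in the Löwner order on symmetric positive semidefinite matrices, P_a ⪯ P_b ⪯ √2·P_a, i.e., the two diagonal preconditioners are spectrally equivalent. -/
/-!
Write `a = λ + μ ηᵢ = (P_a)ᵢᵢ`. Since `Γ` has zero diagonal, row `i` of `A` consists of the diagonal
entry `a` and the off-diagonal entries `-μ Γᵢⱼ`, so `(P_b)ᵢᵢ² = a² + μ² ∑ⱼ Γᵢⱼ²`. The lower bound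
is immediate, and the upper bound follows from `∑ⱼ Γᵢⱼ² ≤ (∑ⱼ Γᵢⱼ)² = ηᵢ²`, valid for nonnegative
entries, together with `μ ηᵢ ≤ a`. The Löwner bounds are the entrywise ones, because both
preconditioners are diagonal.
-/

open Matrix

/-- entrywise `(P_a)_{ii} ≤ (P_b)_{ii} ≤ √2 (P_a)_{ii}`, hence in
the Löwner order `P_a ⪯ P_b ⪯ √2 P_a` (spectral equivalence of the two
diagonal preconditioners). -/
theorem stmt15 (n : ℕ) (hn : 2 ≤ n)
    (lam mu : ℝ) (hlam : 0 < lam) (hmu : 0 < mu)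
    (Γ : Matrix (Fin n) (Fin n) ℝ) (hΓsymm : Γ.IsSymm)
    (hΓrange : ∀ i j, Γ i j ∈ Set.Icc (0 : ℝ) 1)
    (hΓdiag : ∀ i, Γ i i = 0)
    (hΓrow : ∀ i, ∃ j, j ≠ i ∧ 0 < Γ i j)
    (η : Fin n → ℝ) (hη : η = Γ.mulVec fun _ => 1)
    (L : Matrix (Fin n) (Fin n) ℝ) (hL : L = Matrix.diagonal η - Γ)
    (A : Matrix (Fin n) (Fin n) ℝ)
    (hA : A = lam • (1 : Matrix (Fin n) (Fin n) ℝ) + mu • L)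
    (Pa : Matrix (Fin n) (Fin n) ℝ)
    (hPa : Pa = lam • (1 : Matrix (Fin n) (Fin n) ℝ) + mu • Matrix.diagonal η)
    (Pb : Matrix (Fin n) (Fin n) ℝ)
    (hPb : Pb = Matrix.diagonal fun i => Real.sqrt (∑ j, (A i j) ^ 2)) :
    (∀ i, Pa i i ≤ Pb i i ∧ Pb i i ≤ Real.sqrt 2 * Pa i i) ∧
      (Pb - Pa).PosSemidef ∧ (Real.sqrt 2 • Pa - Pb).PosSemidef := by
  have hPa' : Pa = Matrix.diagonal fun i => lam + mu * η i := by
    ext i j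
    by_cases h : i = j
    · subst h; simp [hPa]
    · simp [hPa, h]
  have hη' : ∀ i, η i = ∑ j, Γ i j := fun i => by simp [hη, Matrix.mulVec, dotProduct]
  have hη0 : ∀ i, 0 ≤ η i := fun i => by
    rw [hη']; exact Finset.sum_nonneg fun j _ => (hΓrange i j).1
  have hrow : ∀ i, ∑ j, (A i j) ^ 2 = (lam + mu * η i) ^ 2 + mu ^ 2 * ∑ j, (Γ i j) ^ 2 := by
    intro i
    have hij : ∀ j, (A i j) ^ 2 =
        (if i = j then (lam + mu * η i) ^ 2 else 0) + mu ^ 2 * (Γ i j) ^ 2 := by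
      intro j
      by_cases h : i = j
      · subst h; simp [hA, hL, hΓdiag]
      · simp [hA, hL, h, mul_pow]
    simp only [hij, Finset.sum_add_distrib, Finset.mul_sum, Finset.sum_ite_eq, Finset.mem_univ,
      if_true]
  have hsq : ∀ i, ∑ j, (Γ i j) ^ 2 ≤ η i ^ 2 := fun i => by
    rw [hη']; exact Finset.sum_sq_le_sq_sum_of_nonneg fun j _ => (hΓrange i j).1
  have key : ∀ i, lam + mu * η i ≤ Real.sqrt (∑ j, (A i j) ^ 2) ∧
      Real.sqrt (∑ j, (A i j) ^ 2) ≤ Real.sqrt 2 * (lam + mu * η i) := by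
    intro i
    have hmuη : 0 ≤ mu * η i := mul_nonneg hmu.le (hη0 i)
    have ha : 0 ≤ lam + mu * η i := by linarith
    rw [hrow]
    constructor
    · apply Real.le_sqrt_of_sq_le
      have : 0 ≤ mu ^ 2 * ∑ j, (Γ i j) ^ 2 := by positivity
      linarith
    · apply Real.sqrt_le_iff.mpr
      refine ⟨by positivity, ?_⟩
      rw [mul_pow, Real.sq_sqrt (by norm_num : (0 : ℝ) ≤ 2)]
      have h1 : mu ^ 2 * ∑ j, (Γ i j) ^ 2 ≤ (mu * η i) ^ 2 := by
        rw [mul_pow]; exact mul_le_mul_of_nonneg_left (hsq i) (sq_nonneg mu)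
      have h2 : (mu * η i) ^ 2 ≤ (lam + mu * η i) ^ 2 :=
        pow_le_pow_left₀ hmuη (by linarith) 2
      linarith
  rw [hPa', hPb]
  refine ⟨fun i => by simpa only [Matrix.diagonal_apply_eq] using key i, ?_, ?_⟩
  · rw [Matrix.diagonal_sub]
    exact Matrix.PosSemidef.diagonal fun i => sub_nonneg.mpr (key i).1
  · rw [← Matrix.diagonal_smul, Matrix.diagonal_sub]
    exact Matrix.PosSemidef.diagonal fun i => sub_nonneg.mpr (key i).2
end

section
/- For every nonzero x ∈ ℝⁿ, the generalized Rayleigh quotients satisfy 2^{−1/2}·⟨x, A·x⟩/⟨x, P_a·x⟩ ≤ ⟨x, A·x⟩/⟨x, P_b·x⟩ ≤ ⟨x, A·x⟩/⟨x, P_a·x⟩. In particular, the eigenvalues of P_b⁻¹A satisfy 2^{−1/2}·λ_min(P_a⁻¹A) ≤ Σ(P_b⁻¹A) ≤ λ_max(P_a⁻¹A). -/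
/-!
Write `d i = lam + mu * η i > 0`. Then `A` has diagonal `d` and off-diagonal part `-mu • Γ`, so
`Pa = diagonal d`, while the squared diagonal entries of `Pb` are
`d i ^ 2 + mu ^ 2 * ∑ j, Γ i j ^ 2`. Since the entries of `Γ` are nonnegative,
`∑ j, Γ i j ^ 2 ≤ η i ^ 2`, and hence `d i ≤ (Pb) i i ≤ √2 * d i`: the two preconditioners
are comparable entrywise (`norm_row_bounds`). As `A` is positive semidefinite
(`laplacian_form_nonneg`), dividing `⟨x, A x⟩ ≥ 0` by the comparable quantities `⟨x, Pa x⟩`,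
`⟨x, Pb x⟩` gives the first claim.

For the second claim, an eigenvalue `z` of `Pb⁻¹ * A` is the quotient `⟨v, A v⟩ / ⟨v, Pb v⟩` at an
eigenvector `v` (`exists_eigenvector`), which the first claim compares with
`⟨v, A v⟩ / ⟨v, Pa v⟩`. The latter lies between the extreme eigenvalues of `Pa⁻¹ * A`
(`le_form_of_le_spectrum`), because `Pa⁻¹ * A` has the same characteristic polynomial as the
symmetric matrix `Pa^(-1/2) * A * Pa^(-1/2)`.
-/

open Matrix

/-- The quadratic form of a diagonal matrix. -/
lemma diagonal_form {n : ℕ} (d x : Fin n → ℝ) :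
    x ⬝ᵥ (diagonal d).mulVec x = ∑ i, d i * x i ^ 2 := by
  simp only [dotProduct, mulVec_diagonal]
  exact Finset.sum_congr rfl fun i _ => by ring

lemma diagonal_form_pos {n : ℕ} {d : Fin n → ℝ} (hd : ∀ i, 0 < d i) {x : Fin n → ℝ}
    (hx : x ≠ 0) : 0 < x ⬝ᵥ (diagonal d).mulVec x := by
  rw [diagonal_form]
  obtain ⟨i, hi⟩ := Function.ne_iff.mp hx
  refine Finset.sum_pos' (fun j _ => mul_nonneg (hd j).le (sq_nonneg _)) ⟨i, Finset.mem_univ _, ?_⟩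
  exact mul_pos (hd i) (sq_pos_of_ne_zero hi)

lemma inv_diagonal_of_pos {n : ℕ} {d : Fin n → ℝ} (hd : ∀ i, 0 < d i) :
    (diagonal d)⁻¹ = diagonal fun i => (d i)⁻¹ := by
  refine inv_eq_left_inv ?_
  rw [diagonal_mul_diagonal, ← diagonal_one]
  congr 1
  ext i
  exact inv_mul_cancel₀ (hd i).ne'

/-- Rayleigh bound: a lower bound `m` for the spectrum of `D⁻¹ * M`, with `D` positive diagonal and
`M` symmetric, satisfies `m * ⟨x, D x⟩ ≤ ⟨x, M x⟩`. -/
lemma le_form_of_le_spectrum {n : ℕ} {d : Fin n → ℝ} (hd : ∀ i, 0 < d i)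
    {M : Matrix (Fin n) (Fin n) ℝ} (hM : M.IsSymm) {m : ℝ}
    (hm : ∀ r ∈ spectrum ℝ ((diagonal d)⁻¹ * M), m ≤ r) (x : Fin n → ℝ) :
    m * (x ⬝ᵥ (diagonal d).mulVec x) ≤ x ⬝ᵥ M.mulVec x := by
  set S : Matrix (Fin n) (Fin n) ℝ := diagonal fun i => (√(d i))⁻¹ with hS
  have hs : ∀ i, √(d i) ≠ 0 := fun i => (Real.sqrt_pos.mpr (hd i)).ne'
  have hSS : (diagonal d)⁻¹ = S * S := by
    rw [inv_diagonal_of_pos hd, hS, diagonal_mul_diagonal]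
    congr 1
    ext i
    rw [← mul_inv, Real.mul_self_sqrt (hd i).le]
  have hspec : spectrum ℝ (S * M * S) = spectrum ℝ ((diagonal d)⁻¹ * M) := by
    ext r
    rw [mem_spectrum_iff_isRoot_charpoly, mem_spectrum_iff_isRoot_charpoly, hSS,
      charpoly_mul_comm, ← mul_assoc]
  have hpsd : (S * M * S - algebraMap ℝ _ m).PosSemidef := by
    rw [posSemidef_iff_isHermitian_and_spectrum_nonneg]
    constructor
    · have : (S * M * S).IsHermitian := by
        rw [IsHermitian, conjTranspose_eq_transpose_of_trivial, transpose_mul, transpose_mul,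
          hM.eq, hS, diagonal_transpose, mul_assoc]
      refine this.sub ?_
      rw [IsHermitian, conjTranspose_eq_transpose_of_trivial, algebraMap_eq_diagonal,
        diagonal_transpose]
    · rw [← spectrum.sub_singleton_eq, hspec]
      rintro _ ⟨r, hr, _, rfl, rfl⟩
      exact sub_nonneg.mpr (hm r hr)
  -- the symmetrized form is evaluated at `y = D^(1/2) x`
  set y : Fin n → ℝ := fun i => √(d i) * x i with hy
  have hSy : S.mulVec y = x := by
    ext i
    rw [hS, mulVec_diagonal, hy]
    exact inv_mul_cancel_left₀ (hs i) _
  have hySM : y ⬝ᵥ (S * M * S).mulVec y = x ⬝ᵥ M.mulVec x := by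
    rw [← mulVec_mulVec, hSy, ← mulVec_mulVec, dotProduct_mulVec, ← mulVec_transpose, hS,
      diagonal_transpose, ← hS, hSy]
  have hyy : y ⬝ᵥ y = x ⬝ᵥ (diagonal d).mulVec x := by
    rw [diagonal_form, dotProduct]
    refine Finset.sum_congr rfl fun i _ => ?_
    rw [hy, mul_mul_mul_comm, Real.mul_self_sqrt (hd i).le, sq]
  have h := hpsd.dotProduct_mulVec_nonneg y
  rw [star_trivial, sub_mulVec, dotProduct_sub, hySM, Algebra.algebraMap_eq_smul_one,
    smul_mulVec, one_mulVec, dotProduct_smul, hyy, smul_eq_mul] at h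
  linarith

/-- Elements of the spectrum of `D⁻¹ * M` come with a generalized eigenvector. -/
lemma exists_eigenvector {n : ℕ} {d : Fin n → ℝ} (hd : ∀ i, 0 < d i)
    {M : Matrix (Fin n) (Fin n) ℝ} {z : ℝ} (hz : z ∈ spectrum ℝ ((diagonal d)⁻¹ * M)) :
    ∃ v : Fin n → ℝ, v ≠ 0 ∧ M.mulVec v = z • (diagonal d).mulVec v := by
  rw [← spectrum_toLin', ← Module.End.hasEigenvalue_iff_mem_spectrum] at hz
  obtain ⟨v, hv⟩ := hz.exists_hasEigenvector
  refine ⟨v, hv.2, ?_⟩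
  have h := hv.apply_eq_smul
  rw [toLin'_apply] at h
  have hu : IsUnit (diagonal d).det := by
    rw [det_diagonal]
    exact (Finset.prod_pos fun i _ => hd i).ne'.isUnit
  rw [← mulVec_smul, ← h, mulVec_mulVec, ← mul_assoc, mul_nonsing_inv _ hu, one_mul]

/-- Nonnegativity holds because the form equals `½ ∑ Γ i j (x i - x j)²`. -/
lemma laplacian_form_nonneg {n : ℕ} {Γ : Matrix (Fin n) (Fin n) ℝ} (hs : Γ.IsSymm)
    (h0 : ∀ i j, 0 ≤ Γ i j) (x : Fin n → ℝ) :
    0 ≤ x ⬝ᵥ (diagonal (fun i => ∑ j, Γ i j) - Γ).mulVec x := by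
  have h1 : x ⬝ᵥ (diagonal (fun i => ∑ j, Γ i j) - Γ).mulVec x
      = ∑ i, ∑ j, (Γ i j * x i ^ 2 - Γ i j * x i * x j) := by
    rw [sub_mulVec, dotProduct_sub, diagonal_form]
    simp only [dotProduct, mulVec, Finset.mul_sum, Finset.sum_mul, Finset.sum_sub_distrib]
    congr 1
    exact Finset.sum_congr rfl fun i _ => Finset.sum_congr rfl fun j _ => by ring
  have h2 : x ⬝ᵥ (diagonal (fun i => ∑ j, Γ i j) - Γ).mulVec x
      = ∑ i, ∑ j, (Γ i j * x j ^ 2 - Γ i j * x i * x j) := by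
    rw [h1, Finset.sum_comm]
    refine Finset.sum_congr rfl fun i _ => Finset.sum_congr rfl fun j _ => ?_
    rw [hs.apply i j]
    ring
  have h3 : 0 ≤ ∑ i, ∑ j, Γ i j * (x i - x j) ^ 2 :=
    Finset.sum_nonneg fun i _ => Finset.sum_nonneg fun j _ => mul_nonneg (h0 i j) (sq_nonneg _)
  have h4 : ∑ i, ∑ j, Γ i j * (x i - x j) ^ 2
      = ∑ i, ∑ j, (Γ i j * x i ^ 2 - Γ i j * x i * x j)
        + ∑ i, ∑ j, (Γ i j * x j ^ 2 - Γ i j * x i * x j) := by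
    simp only [← Finset.sum_add_distrib]
    exact Finset.sum_congr rfl fun i _ => Finset.sum_congr rfl fun j _ => by ring
  linarith

/-- A vector `a` with `i`-th entry `l + m * ∑ g` and other entries `-m * g j`, where `g ≥ 0`,
has Euclidean norm between `a i` and `√2 * a i`. -/
lemma norm_row_bounds {n : ℕ} {l m : ℝ} (hl : 0 < l) (hm : 0 < m) {g a : Fin n → ℝ}
    (hg : ∀ j, 0 ≤ g j) (i : Fin n)
    (hai : a i = l + m * ∑ j, g j) (haj : ∀ j, j ≠ i → a j = -(m * g j)) :
    l + m * ∑ j, g j ≤ √(∑ j, a j ^ 2) ∧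
      √(∑ j, a j ^ 2) ≤ √2 * (l + m * ∑ j, g j) := by
  have hsum : 0 ≤ ∑ j, g j := Finset.sum_nonneg fun j _ => hg j
  have hd : 0 < l + m * ∑ j, g j := by positivity
  have hsplit := Finset.add_sum_erase Finset.univ (fun j => a j ^ 2) (Finset.mem_univ i)
  have herase : ∑ j ∈ Finset.univ.erase i, a j ^ 2 ≤ (m * ∑ j, g j) ^ 2 := by
    calc ∑ j ∈ Finset.univ.erase i, a j ^ 2
        = ∑ j ∈ Finset.univ.erase i, (m * g j) ^ 2 :=
          Finset.sum_congr rfl fun j hj => by rw [haj j (Finset.ne_of_mem_erase hj), neg_sq]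
      _ ≤ ∑ j, (m * g j) ^ 2 :=
          Finset.sum_le_sum_of_subset_of_nonneg (Finset.erase_subset _ _)
            fun j _ _ => sq_nonneg _
      _ ≤ (∑ j, m * g j) ^ 2 :=
          Finset.sum_sq_le_sq_sum_of_nonneg fun j _ => mul_nonneg hm.le (hg j)
      _ = (m * ∑ j, g j) ^ 2 := by rw [Finset.mul_sum]
  simp only [hai] at hsplit
  constructor
  · refine Real.le_sqrt_of_sq_le ?_
    have : 0 ≤ ∑ j ∈ Finset.univ.erase i, a j ^ 2 := Finset.sum_nonneg fun j _ => sq_nonneg _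
    linarith
  · rw [Real.sqrt_le_left (by positivity), mul_pow, Real.sq_sqrt zero_le_two]
    have : (m * ∑ j, g j) ^ 2 ≤ (l + m * ∑ j, g j) ^ 2 := by
      gcongr
      linarith
    linarith

/-- `2^{-1/2} ⟨x,Ax⟩/⟨x,P_a x⟩ ≤ ⟨x,Ax⟩/⟨x,P_b x⟩ ≤
⟨x,Ax⟩/⟨x,P_a x⟩` for all `x ≠ 0`; in particular the eigenvalues of `P_b⁻¹A`
satisfy `2^{-1/2} λ_min(P_a⁻¹A) ≤ Σ(P_b⁻¹A) ≤ λ_max(P_a⁻¹A)`. -/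
theorem stmt16 (n : ℕ) (hn : 2 ≤ n)
    (lam mu : ℝ) (hlam : 0 < lam) (hmu : 0 < mu)
    (Γ : Matrix (Fin n) (Fin n) ℝ) (hΓsymm : Γ.IsSymm)
    (hΓrange : ∀ i j, Γ i j ∈ Set.Icc (0 : ℝ) 1)
    (hΓdiag : ∀ i, Γ i i = 0)
    (hΓrow : ∀ i, ∃ j, j ≠ i ∧ 0 < Γ i j)
    (η : Fin n → ℝ) (hη : η = Γ.mulVec fun _ => 1)
    (L : Matrix (Fin n) (Fin n) ℝ) (hL : L = Matrix.diagonal η - Γ)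
    (A : Matrix (Fin n) (Fin n) ℝ)
    (hA : A = lam • (1 : Matrix (Fin n) (Fin n) ℝ) + mu • L)
    (Pa : Matrix (Fin n) (Fin n) ℝ)
    (hPa : Pa = lam • (1 : Matrix (Fin n) (Fin n) ℝ) + mu • Matrix.diagonal η)
    (Pb : Matrix (Fin n) (Fin n) ℝ)
    (hPb : Pb = Matrix.diagonal fun i => Real.sqrt (∑ j, (A i j) ^ 2)) :
    (∀ x : Fin n → ℝ, x ≠ 0 →
      (Real.sqrt 2)⁻¹ * ((x ⬝ᵥ A.mulVec x) / (x ⬝ᵥ Pa.mulVec x)) ≤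
          (x ⬝ᵥ A.mulVec x) / (x ⬝ᵥ Pb.mulVec x) ∧
        (x ⬝ᵥ A.mulVec x) / (x ⬝ᵥ Pb.mulVec x) ≤
          (x ⬝ᵥ A.mulVec x) / (x ⬝ᵥ Pa.mulVec x)) ∧
    (∀ z ∈ spectrum ℝ (Pb⁻¹ * A),
      (Real.sqrt 2)⁻¹ * sInf (spectrum ℝ (Pa⁻¹ * A)) ≤ z ∧
        z ≤ sSup (spectrum ℝ (Pa⁻¹ * A))) := by
  have h0 : ∀ i j, 0 ≤ Γ i j := fun i j => (hΓrange i j).1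
  have hη' : η = fun i => ∑ j, Γ i j := by
    rw [hη]
    ext i
    simp [mulVec, dotProduct]
  set d : Fin n → ℝ := fun i => lam + mu * ∑ j, Γ i j with hd_def
  have hd : ∀ i, 0 < d i := fun i =>
    add_pos_of_pos_of_nonneg hlam (mul_nonneg hmu.le (Finset.sum_nonneg fun j _ => h0 i j))
  have hPa' : Pa = diagonal d := by
    rw [hPa, hη', ← diagonal_one, ← diagonal_smul, ← diagonal_smul, diagonal_add]
    congr 1
    ext i
    simp [hd_def]
  set e : Fin n → ℝ := fun i => √(∑ j, A i j ^ 2) with he_def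
  have hbounds : ∀ i, d i ≤ e i ∧ e i ≤ √2 * d i := fun i => by
    refine norm_row_bounds hlam hmu (h0 i) i ?_ fun j hj => ?_
    · simp [hA, hL, hη', hΓdiag]
    · simp [hA, hL, diagonal_apply_ne' _ hj, one_apply_ne' hj]
  have he : ∀ i, 0 < e i := fun i => (hd i).trans_le (hbounds i).1
  have hAsymm : A.IsSymm := by
    rw [IsSymm, hA, hL, transpose_add, transpose_smul, transpose_smul, transpose_sub,
      transpose_one, diagonal_transpose, hΓsymm.eq]
  have hAnn : ∀ x : Fin n → ℝ, 0 ≤ x ⬝ᵥ A.mulVec x := fun x => by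
    rw [hA, hL, hη', add_mulVec, dotProduct_add, smul_mulVec, smul_mulVec, one_mulVec,
      dotProduct_smul, dotProduct_smul, smul_eq_mul, smul_eq_mul]
    exact add_nonneg
      (mul_nonneg hlam.le (Finset.sum_nonneg fun i _ => mul_self_nonneg (x i)))
      (mul_nonneg hmu.le (laplacian_form_nonneg hΓsymm h0 x))
  subst hPb
  rw [hPa']
  have hquot : ∀ x : Fin n → ℝ, x ≠ 0 →
      (Real.sqrt 2)⁻¹ * ((x ⬝ᵥ A.mulVec x) / (x ⬝ᵥ (diagonal d).mulVec x)) ≤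
          (x ⬝ᵥ A.mulVec x) / (x ⬝ᵥ (diagonal e).mulVec x) ∧
        (x ⬝ᵥ A.mulVec x) / (x ⬝ᵥ (diagonal e).mulVec x) ≤
          (x ⬝ᵥ A.mulVec x) / (x ⬝ᵥ (diagonal d).mulVec x) := by
    intro x hx
    have hdx := diagonal_form_pos hd hx
    have hex := diagonal_form_pos he hx
    have hle : x ⬝ᵥ (diagonal d).mulVec x ≤ x ⬝ᵥ (diagonal e).mulVec x := by
      rw [diagonal_form, diagonal_form]
      exact Finset.sum_le_sum fun i _ =>
        mul_le_mul_of_nonneg_right (hbounds i).1 (sq_nonneg _)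
    have hle' : x ⬝ᵥ (diagonal e).mulVec x ≤ √2 * (x ⬝ᵥ (diagonal d).mulVec x) := by
      rw [diagonal_form, diagonal_form, Finset.mul_sum]
      refine Finset.sum_le_sum fun i _ => ?_
      rw [← mul_assoc]
      exact mul_le_mul_of_nonneg_right (hbounds i).2 (sq_nonneg _)
    constructor
    · rw [inv_mul_eq_div, div_div, mul_comm]
      exact div_le_div_of_nonneg_left (hAnn x) hex hle'
    · exact div_le_div_of_nonneg_left (hAnn x) hdx hle
  refine ⟨hquot, fun z hz => ?_⟩
  obtain ⟨v, hv, hAv⟩ := exists_eigenvector he hz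
  have hdv := diagonal_form_pos hd hv
  have hzq : (v ⬝ᵥ A.mulVec v) / (v ⬝ᵥ (diagonal e).mulVec v) = z := by
    rw [hAv, dotProduct_smul, smul_eq_mul]
    exact mul_div_cancel_right₀ _ (diagonal_form_pos he hv).ne'
  have hfin : (spectrum ℝ ((diagonal d)⁻¹ * A)).Finite := Matrix.finite_spectrum _
  have hlow := le_form_of_le_spectrum hd hAsymm
    (fun r hr => csInf_le hfin.bddBelow hr) v
  -- the upper Rayleigh bound is the lower one for `-A`
  have hupp : v ⬝ᵥ A.mulVec v ≤
      sSup (spectrum ℝ ((diagonal d)⁻¹ * A)) * (v ⬝ᵥ (diagonal d).mulVec v) := by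
    have h := le_form_of_le_spectrum (M := -A) (m := -sSup (spectrum ℝ ((diagonal d)⁻¹ * A)))
      hd hAsymm.neg (fun r hr => ?_) v
    · rw [neg_mulVec, dotProduct_neg] at h
      linarith
    · rw [mul_neg, ← spectrum.neg_eq, Set.mem_neg] at hr
      linarith [le_csSup hfin.bddAbove hr]
  obtain ⟨hq1, hq2⟩ := hquot v hv
  rw [hzq] at hq1 hq2
  constructor
  · refine le_trans ?_ hq1
    gcongr
    exact (le_div_iff₀ hdv).mpr hlow
  · exact hq2.trans ((div_le_iff₀ hdv).mpr hupp)
end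

section
/- Define the deflated matrix T := A − (λ/n)·J, where J is the n×n all-ones matrix. Then for every nonzero y ∈ ℝⁿ the generalized Rayleigh quotients satisfy ⟨y, A·y⟩/⟨y, P_a·y⟩ − λ/(λ + μ·min_i η_i) ≤ ⟨y, T·y⟩/⟨y, P_a·y⟩ ≤ ⟨y, A·y⟩/⟨y, P_a·y⟩. -/
/-!
The deflation changes the numerator only by the rank-one term:
`⟨y, T y⟩ = ⟨y, A y⟩ - (lam / n) (∑ i, y i) ^ 2`, which gives the upper bound. For the lower
bound, Cauchy-Schwarz gives `(∑ i, y i) ^ 2 ≤ n ∑ i, y i ^ 2`, while the diagonal form satisfies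
`⟨y, Pa y⟩ = ∑ i, (lam + mu η i) y i ^ 2 ≥ (lam + mu min η) ∑ i, y i ^ 2`, so the removed term
is at most `lam / (lam + mu min η)` times `⟨y, Pa y⟩`.
-/

open Matrix

/-- for the deflated matrix `T = A − (λ/n)J` and every `y ≠ 0`,
`⟨y,Ay⟩/⟨y,P_a y⟩ − λ/(λ + μ min η) ≤ ⟨y,Ty⟩/⟨y,P_a y⟩ ≤ ⟨y,Ay⟩/⟨y,P_a y⟩`. -/
theorem stmt18 (n : ℕ) (hn : 2 ≤ n)
    (lam mu : ℝ) (hlam : 0 < lam) (hmu : 0 < mu)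
    (Γ : Matrix (Fin n) (Fin n) ℝ) (hΓsymm : Γ.IsSymm)
    (hΓrange : ∀ i j, Γ i j ∈ Set.Icc (0 : ℝ) 1)
    (hΓdiag : ∀ i, Γ i i = 0)
    (hΓrow : ∀ i, ∃ j, j ≠ i ∧ 0 < Γ i j)
    (η : Fin n → ℝ) (hη : η = Γ.mulVec fun _ => 1)
    (L : Matrix (Fin n) (Fin n) ℝ) (hL : L = Matrix.diagonal η - Γ)
    (A : Matrix (Fin n) (Fin n) ℝ)
    (hA : A = lam • (1 : Matrix (Fin n) (Fin n) ℝ) + mu • L)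
    (Pa : Matrix (Fin n) (Fin n) ℝ)
    (hPa : Pa = lam • (1 : Matrix (Fin n) (Fin n) ℝ) + mu • Matrix.diagonal η)
    (J : Matrix (Fin n) (Fin n) ℝ) (hJ : J = Matrix.of fun _ _ => (1 : ℝ))
    (T : Matrix (Fin n) (Fin n) ℝ) (hT : T = A - (lam / n) • J) :
    ∀ y : Fin n → ℝ, y ≠ 0 →
      (y ⬝ᵥ A.mulVec y) / (y ⬝ᵥ Pa.mulVec y) - lam / (lam + mu * ⨅ i, η i) ≤
          (y ⬝ᵥ T.mulVec y) / (y ⬝ᵥ Pa.mulVec y) ∧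
        (y ⬝ᵥ T.mulVec y) / (y ⬝ᵥ Pa.mulVec y) ≤
          (y ⬝ᵥ A.mulVec y) / (y ⬝ᵥ Pa.mulVec y) := by
  intro y hy
  have hn0 : (0 : ℝ) < n := by exact_mod_cast (by omega : 0 < n)
  have : Nonempty (Fin n) := ⟨⟨0, by omega⟩⟩
  have hη0 : ∀ i, 0 ≤ η i := by
    intro i
    rw [hη]
    simp only [Matrix.mulVec, dotProduct, mul_one]
    exact Finset.sum_nonneg fun j _ => (hΓrange i j).1
  set m : ℝ := ⨅ i, η i
  have hm0 : 0 ≤ m := le_ciInf hη0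
  have hmle : ∀ i, m ≤ η i := fun i => ciInf_le (Set.finite_range η).bddBelow i
  have hd : 0 < lam + mu * m := by positivity
  have hJy : y ⬝ᵥ J.mulVec y = (∑ i, y i) ^ 2 := by
    rw [hJ, sq, Finset.sum_mul]
    simp [Matrix.mulVec, dotProduct]
  have hTy : y ⬝ᵥ T.mulVec y = y ⬝ᵥ A.mulVec y - lam / n * (∑ i, y i) ^ 2 := by
    rw [hT, Matrix.sub_mulVec, Matrix.smul_mulVec, dotProduct_sub, dotProduct_smul, hJy,
      smul_eq_mul]
  have hPy : y ⬝ᵥ Pa.mulVec y = ∑ i, (lam + mu * η i) * y i ^ 2 := by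
    rw [hPa, Matrix.add_mulVec, Matrix.smul_mulVec, Matrix.smul_mulVec, Matrix.one_mulVec]
    simp only [dotProduct, Pi.add_apply, Pi.smul_apply, Matrix.mulVec_diagonal, smul_eq_mul]
    exact Finset.sum_congr rfl fun i _ => by ring
  have hCS : (∑ i, y i) ^ 2 ≤ n * ∑ i, y i ^ 2 := by
    simpa using sq_sum_le_card_mul_sum_sq (s := Finset.univ) (f := y)
  have hq : 0 < ∑ i, y i ^ 2 := by
    obtain ⟨i, hi⟩ := Function.ne_iff.mp hy
    exact Finset.sum_pos' (fun _ _ => sq_nonneg _) ⟨i, Finset.mem_univ i, sq_pos_of_ne_zero hi⟩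
  have hPge : (lam + mu * m) * ∑ i, y i ^ 2 ≤ y ⬝ᵥ Pa.mulVec y := by
    rw [hPy, Finset.mul_sum]
    refine Finset.sum_le_sum fun i _ => ?_
    have := hmle i
    gcongr
  have hP : 0 < y ⬝ᵥ Pa.mulVec y := (mul_pos hd hq).trans_le hPge
  have hrem : lam / n * (∑ i, y i) ^ 2 ≤ lam * ∑ i, y i ^ 2 := by
    calc lam / n * (∑ i, y i) ^ 2 ≤ lam / n * (n * ∑ i, y i ^ 2) := by gcongr
      _ = lam * ∑ i, y i ^ 2 := by field_simp
  rw [hTy, sub_div]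
  constructor
  · refine sub_le_sub_left ?_ _
    rw [div_le_div_iff₀ hP hd]
    calc lam / n * (∑ i, y i) ^ 2 * (lam + mu * m)
        ≤ lam * (∑ i, y i ^ 2) * (lam + mu * m) := by gcongr
      _ = lam * ((lam + mu * m) * ∑ i, y i ^ 2) := by ring
      _ ≤ lam * (y ⬝ᵥ Pa.mulVec y) := by gcongr
  · exact sub_le_self _ (by positivity)
end

section
/- Let B ∈ ℝ^{n×n} be symmetric with B·1_n = 0, let λ > 0, and set A := λ·I + B. Let Q ∈ ℝ^{n×n} be the matrix whose first column is 1_n and whose i-th column is e₁ − eᵢ for i ∈ {2,…,n} (Q is invertible), and for ℓ₁ ∈ ℝ let P := diag(ℓ₁, 1, …, 1) be the leverage operator. Then Q·P·(Q⁻¹·A·Q)·Q⁻¹ = A + (λ·(ℓ₁ − 1)/n)·J, where J is the n×n all-ones matrix. -/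
/-!
The matrix `J` acts on the columns of `Q` as `n` times the projection onto the first one:
`J 1 = n 1` and `J (e₁ - eᵢ) = 0`. Hence `Q P = (I + ((ℓ₁ - 1) / n) J) Q`, and conjugation by `Q`
gives `Q P Q⁻¹ A = A + ((ℓ₁ - 1) / n) J A`. Since `B` is symmetric and kills `1`, also `J B = 0`,
so that `J A = λ J`. Invertibility of `Q` comes from an explicit left inverse, with first row
`(1 / n) 1ᵀ` and `i`-th row `(1 / n) 1ᵀ - eᵢᵀ`.
-/

open Matrix

/-- for symmetric `B` with `B 1 = 0`, `A = λI + B`, the change of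
basis `Q` (first column `1ₙ`, `i`-th column `e₁ − eᵢ`) is invertible, and for
the leverage operator `P = diag(ℓ₁,1,…,1)` one has
`Q·P·(Q⁻¹AQ)·Q⁻¹ = A + (λ(ℓ₁−1)/n)·J`. -/
theorem stmt19 (n : ℕ) [NeZero n] (hn : 2 ≤ n) (lam : ℝ) (hlam : 0 < lam)
    (B : Matrix (Fin n) (Fin n) ℝ) (hBsymm : B.IsSymm)
    (hB1 : B.mulVec (fun _ => 1) = 0)
    (A : Matrix (Fin n) (Fin n) ℝ)
    (hA : A = lam • (1 : Matrix (Fin n) (Fin n) ℝ) + B)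
    (Q : Matrix (Fin n) (Fin n) ℝ)
    (hQ : ∀ j i : Fin n, Q j i =
      if i = 0 then 1 else (if j = 0 then (1 : ℝ) else 0) - (if j = i then 1 else 0))
    (l₁ : ℝ)
    (P : Matrix (Fin n) (Fin n) ℝ)
    (hP : P = Matrix.diagonal fun i => if i = 0 then l₁ else 1)
    (J : Matrix (Fin n) (Fin n) ℝ) (hJ : J = Matrix.of fun _ _ => (1 : ℝ)) :
    IsUnit Q ∧ Q * P * (Q⁻¹ * A * Q) * Q⁻¹ = A + (lam * (l₁ - 1) / n) • J := by
  have hn0 : (n : ℝ) ≠ 0 := Nat.cast_ne_zero.mpr (NeZero.ne n)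
  have hcol : ∀ k, ∑ j, Q j k = if k = 0 then (n : ℝ) else 0 := by
    intro k
    by_cases hk : k = 0 <;> simp [hQ, hk]
  have hunit : IsUnit Q := by
    let R : Matrix (Fin n) (Fin n) ℝ := Matrix.of fun i j =>
      (n : ℝ)⁻¹ - (if i = 0 then 0 else if i = j then 1 else 0)
    refine IsUnit.of_mul_eq_one_right R ?_
    ext i k
    have hR : (R * Q) i k = (n : ℝ)⁻¹ * ∑ j, Q j k - (if i = 0 then 0 else Q i k) := by
      rw [Matrix.mul_apply, Finset.mul_sum]
      by_cases hi : i = 0 <;> simp [R, hi, sub_mul, Finset.sum_sub_distrib]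
    rw [hR, hcol, hQ, Matrix.one_apply]
    by_cases hi : i = 0 <;> by_cases hk : k = 0
    · simp [hi, hk, hn0]
    · simp [hi, hk, Ne.symm hk]
    · simp [hi, hk, hn0]
    · simp [hi, hk]
  refine ⟨hunit, ?_⟩
  have hdet : IsUnit Q.det := (Matrix.isUnit_iff_isUnit_det Q).mp hunit
  have hQP : Q * P = (1 + ((l₁ - 1) / n) • J) * Q := by
    ext j k
    have hJQ : (J * Q) j k = ∑ i, Q i k := by simp [hJ, Matrix.mul_apply]
    rw [add_mul, one_mul, Matrix.smul_mul, Matrix.add_apply, Matrix.smul_apply, hJQ, hcol, hP,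
      Matrix.mul_diagonal]
    by_cases hk : k = 0
    · simp [hQ, hk, hn0]
    · simp [hk]
  have hJB : J * B = 0 := by
    ext j k
    have h := congrFun hB1 k
    simp only [Matrix.mulVec, dotProduct, mul_one] at h
    simpa [hJ, Matrix.mul_apply, hBsymm.apply] using h
  calc Q * P * (Q⁻¹ * A * Q) * Q⁻¹
      = (1 + ((l₁ - 1) / n) • J) * (Q * Q⁻¹) * A * (Q * Q⁻¹) := by
        rw [hQP]; simp only [mul_assoc]
    _ = A + ((l₁ - 1) / n) • (J * A) := by
        rw [Matrix.mul_nonsing_inv Q hdet, mul_one, mul_one, add_mul, one_mul, Matrix.smul_mul]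
    _ = A + (lam * (l₁ - 1) / n) • J := by
        have hJA : J * A = lam • J := by
          rw [hA, mul_add, hJB, add_zero, Matrix.mul_smul, mul_one]
        rw [hJA, smul_smul]
        congr 2
        ring
end
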